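/- Let f : ℝ^n → [0,∞) be a measurable function that is bounded and integrable. For (θ,t) ∈ S^{n-1} × ℝ let ‖f‖_{θ,t} denote the essential supremum of y ↦ f(tθ + y) over θ^⊥ with respect to its Lebesgue measure. Then ∫_{S^{n-1}} ∫_ℝ ( Rf(θ,t) )^{n+1} / ‖f‖_{θ,t} dt d*θ ≤ ( b_{n-1}^{n+1} · b_{n²} / ( b_n^{n} · b_{n²−1} ) ) · ( ∫_{ℝ^n} f(x) dx )^{n}, with the convention that the integrand is 0 whenever ‖f‖_{θ,t} = 0. (Case k = n−1 of the Dann–Paouris–Pivovarov inequality for the k-plane transform.) -/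

import Mathlib

/-!
The affine Blaschke–Petkantschin formula writes `(∫ f) ^ n` as an integral, over the hyperplanes
`H`, of the volumes of the simplices with `n` vertices on `H`, weighted by `f` at the vertices.
Steiner symmetrizations do not increase this weighted volume and round `f` on `H`, so that among
the densities of given mass and given supremum on `H` it is least for a multiple of the indicator of
a ball; by scaling, it is then at least a constant times `(∫_H f) ^ (n + 1) / ‖f‖_H`. In the
coordinates of the Blaschke–Petkantschin formula, where a hyperplane is a graph, this is the claimed
bound, and the gnomonic chart carries it to the sphere. For the indicator of the unit ball all these
steps are equalities, which evaluates the constant.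
-/

open MeasureTheory Metric Real
open scoped ENNReal NNReal

noncomputable section

/-- The normalized (probability) surface measure `d*θ` on the unit sphere of
`EuclideanSpace ℝ (Fin n)`. -/
def sphMeasure (n : ℕ) : Measure (sphere (0 : EuclideanSpace ℝ (Fin n)) 1) :=
  ((volume : Measure (EuclideanSpace ℝ (Fin n))).toSphere Set.univ)⁻¹ •
    (volume : Measure (EuclideanSpace ℝ (Fin n))).toSphere

/-- The hyperplane Radon transform: `Rf(θ,t) = ∫_{θ^⊥} f(tθ + y) dy`, where `θ^⊥` carries its
canonical Lebesgue measure as an (n-1)-dimensional inner product space. -/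
def Radon (n : ℕ) (f : EuclideanSpace ℝ (Fin n) → ℝ≥0∞)
    (θ : sphere (0 : EuclideanSpace ℝ (Fin n)) 1) (t : ℝ) : ℝ≥0∞ :=
  ∫⁻ y : ((ℝ ∙ (θ : EuclideanSpace ℝ (Fin n)))ᗮ),
    f (t • (θ : EuclideanSpace ℝ (Fin n)) + (y : EuclideanSpace ℝ (Fin n)))

/-- `b_m = π^{m/2}/Γ(m/2+1)`, the volume of the m-dimensional unit ball. -/
def ballVol (m : ℕ) : ℝ := Real.pi ^ ((m : ℝ) / 2) / Real.Gamma ((m : ℝ) / 2 + 1)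

/-- Euclidean space `ℝ^d` with the Euclidean norm. -/
abbrev E (d : ℕ) := EuclideanSpace ℝ (Fin d)

namespace E

variable {k : ℕ}

/-- The point of `ℝ × ℝ^k = ℝ^(k+1)` with first coordinate `h` and remaining coordinates `z`. -/
def cons (h : ℝ) (z : E k) : E (k + 1) :=
  WithLp.toLp 2 (Fin.cons h (fun i ↦ z i) : Fin (k + 1) → ℝ)

/-- The orthogonal projection `ℝ^(k+1) → ℝ^k` that drops the first coordinate. -/
def tail (x : E (k + 1)) : E k := WithLp.toLp 2 (fun i ↦ x i.succ)

@[simp] lemma cons_zero (h : ℝ) (z : E k) : cons h z 0 = h := rfl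

@[simp] lemma cons_succ (h : ℝ) (z : E k) (i : Fin k) : cons h z i.succ = z i := rfl

@[simp] lemma tail_apply (x : E (k + 1)) (i : Fin k) : tail x i = x i.succ := rfl

@[simp] lemma tail_cons (h : ℝ) (z : E k) : tail (cons h z) = z := by
  ext i; simp

lemma ext_zero_succ {x y : E (k + 1)} (h0 : x 0 = y 0) (hs : ∀ i : Fin k, x i.succ = y i.succ) :
    x = y := by
  ext i
  exact Fin.cases h0 hs i

lemma cons_tail (x : E (k + 1)) : cons (x 0) (tail x) = x :=
  ext_zero_succ rfl fun _ ↦ rfl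

lemma cons_add (h h' : ℝ) (z z' : E k) : cons (h + h') (z + z') = cons h z + cons h' z' :=
  ext_zero_succ (by simp) (by simp)

lemma cons_smul (c h : ℝ) (z : E k) : cons (c * h) (c • z) = c • cons h z :=
  ext_zero_succ (by simp) (by simp)

lemma norm_sq_cons (h : ℝ) (z : E k) : ‖cons h z‖ ^ 2 = h ^ 2 + ‖z‖ ^ 2 := by
  simp [EuclideanSpace.norm_sq_eq, Fin.sum_univ_succ]

lemma inner_cons (h h' : ℝ) (z z' : E k) :
    inner ℝ (cons h z) (cons h' z') = h * h' + inner ℝ z z' := by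
  simp [PiLp.inner_apply, Fin.sum_univ_succ, mul_comm]

lemma abs_le_norm_cons (h : ℝ) (z : E k) : |h| ≤ ‖cons h z‖ := by
  refine abs_le_of_sq_le_sq ?_ (norm_nonneg _)
  rw [norm_sq_cons]
  exact le_add_of_nonneg_right (sq_nonneg _)

@[fun_prop] lemma continuous_cons {α : Type*} [TopologicalSpace α] {u : α → ℝ} {v : α → E k}
    (hu : Continuous u) (hv : Continuous v) : Continuous fun a ↦ cons (u a) (v a) :=
  (PiLp.continuous_toLp 2 _).comp (hu.finCons (by fun_prop))

@[fun_prop] lemma measurable_cons {α : Type*} [MeasurableSpace α] {u : α → ℝ} {v : α → E k}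
    (hu : Measurable u) (hv : Measurable v) : Measurable fun a ↦ cons (u a) (v a) :=
  (continuous_cons continuous_fst continuous_snd).measurable.comp (hu.prodMk hv)

@[fun_prop] lemma continuous_tail : Continuous (tail : E (k + 1) → E k) := by
  unfold tail
  fun_prop

@[fun_prop] lemma measurable_tail : Measurable (tail : E (k + 1) → E k) :=
  continuous_tail.measurable

/-- `E.cons` and its inverse, as a measurable equivalence. -/
def consEquiv (k : ℕ) : ℝ × E k ≃ᵐ E (k + 1) where
  toFun p := cons p.1 p.2
  invFun x := (x 0, tail x)
  left_inv p := by simp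
  right_inv x := cons_tail x
  measurable_toFun := by
    simp only [Equiv.coe_fn_mk]
    fun_prop
  measurable_invFun := by
    simp only [Equiv.coe_fn_symm_mk]
    fun_prop

lemma volume_preserving_consEquiv (k : ℕ) : MeasurePreserving (consEquiv k) := by
  have hpi := (volume_preserving_piFinSuccAbove (fun _ : Fin (k + 1) ↦ ℝ) 0).symm
  have hofLp := (MeasurePreserving.id (volume : Measure ℝ)).prod
    (PiLp.volume_preserving_ofLp (Fin k))
  convert! (PiLp.volume_preserving_toLp (Fin (k + 1))).comp (hpi.comp hofLp) using 1
  funext p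
  refine ext_zero_succ ?_ fun i ↦ ?_ <;>
    simp [consEquiv, MeasurableEquiv.piFinSuccAbove]

lemma lintegral_cons {F : E (k + 1) → ℝ≥0∞} (hF : Measurable F) :
    ∫⁻ x, F x = ∫⁻ h, ∫⁻ z, F (cons h z) := by
  rw [(volume_preserving_consEquiv k).lintegral_map_equiv F, Measure.volume_eq_prod]
  exact lintegral_prod _ (hF.comp (consEquiv k).measurable).aemeasurable

lemma lintegral_cons_symm {F : E (k + 1) → ℝ≥0∞} (hF : Measurable F) :
    ∫⁻ x, F x = ∫⁻ z, ∫⁻ h, F (cons h z) := by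
  rw [lintegral_cons hF, lintegral_lintegral_swap]
  exact (hF.comp (by fun_prop)).aemeasurable

lemma lintegral_pi_cons {N : ℕ} {F : (Fin N → E (k + 1)) → ℝ≥0∞} (hF : Measurable F) :
    ∫⁻ Y, F Y = ∫⁻ z : Fin N → E k, ∫⁻ h : Fin N → ℝ, F (fun i ↦ cons (h i) (z i)) := by
  have hcons : MeasurePreserving fun (Y : Fin N → ℝ × E k) i ↦ consEquiv k (Y i) :=
    measurePreserving_pi (fun _ ↦ volume) (fun _ ↦ volume) fun _ ↦ volume_preserving_consEquiv k
  have hsplit := (volume_measurePreserving_arrowProdEquivProdArrow ℝ (E k) (Fin N)).symm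
  rw [← hcons.lintegral_comp hF, hsplit.lintegral_map_equiv, Measure.volume_eq_prod]
  exact lintegral_prod_symm _
    ((hF.comp hcons.measurable).comp (MeasurableEquiv.measurable _)).aemeasurable

end E

section Pi

variable {N : ℕ} {α : Type*} [MeasureSpace α] [SigmaFinite (volume : Measure α)]

lemma lintegral_pi_succ {F : (Fin (N + 1) → α) → ℝ≥0∞} (hF : Measurable F) :
    ∫⁻ x, F x = ∫⁻ a, ∫⁻ x : Fin N → α, F (Fin.cons a x) := by
  have hpi := (volume_preserving_piFinSuccAbove (fun _ : Fin (N + 1) ↦ α) 0).symm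
  rw [hpi.lintegral_map_equiv, Measure.volume_eq_prod]
  refine (lintegral_prod _ (hF.comp (MeasurableEquiv.measurable _)).aemeasurable).trans ?_
  simp only [Function.comp_apply, MeasurableEquiv.piFinSuccAbove_symm_apply,
    Fin.insertNthEquiv_zero]
  rfl

lemma lintegral_pi_prod {g : Fin N → α → ℝ≥0∞} (hg : ∀ i, Measurable (g i)) :
    ∫⁻ x : Fin N → α, ∏ i, g i (x i) = ∏ i, ∫⁻ a, g i a := by
  induction N with
  | zero => simp [volume_pi]
  | succ N ih =>
    rw [lintegral_pi_succ (by fun_prop)]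
    simp only [Fin.prod_univ_succ, Fin.cons_zero, Fin.cons_succ]
    rw [← ih fun i ↦ hg i.succ, ← lintegral_mul_const _ (hg 0)]
    exact lintegral_congr fun a ↦ lintegral_const_mul _ (by fun_prop)

end Pi

section Bathtub

open Set

lemma mul_secant_le_of_cut {u : ℝ → ℝ} (hu : ConvexOn ℝ univ u) {p q h w : ℝ} (hpq : p < q)
    (hin : h ∈ Ioo p q → w ≤ 0) (hout : h ∉ Ioo p q → 0 ≤ w) :
    w * ((q - h) * u p + (h - p) * u q) ≤ (q - p) * (w * u h) := by
  rw [mul_left_comm (q - p)]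
  by_cases hI : h ∈ Ioo p q
  · exact mul_le_mul_of_nonpos_left
      (hu.secant_mono_aux1 (mem_univ p) (mem_univ q) hI.1 hI.2) (hin hI)
  refine mul_le_mul_of_nonneg_left ?_ (hout hI)
  simp only [mem_Ioo, not_and_or, not_lt] at hI
  rcases hI with hp | hq
  · rcases hp.eq_or_lt with rfl | hp
    · simp
    · linarith [hu.secant_mono_aux1 (mem_univ h) (mem_univ q) hp hpq]
  · rcases hq.eq_or_lt with rfl | hq
    · simp
    · linarith [hu.secant_mono_aux1 (mem_univ p) (mem_univ h) hpq hq]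

-- The Karlin–Novikoff cut criterion: `w` has vanishing moments against the secant of `u`
-- over `[p, q]`, and `w` and `u - secant` have the same sign everywhere.
lemma integral_mul_nonneg_of_cut {u w : ℝ → ℝ} (hu : ConvexOn ℝ univ u) {p q : ℝ} (hpq : p < q)
    (hin : ∀ h ∈ Ioo p q, w h ≤ 0) (hout : ∀ h ∉ Ioo p q, 0 ≤ w h) (hw : Integrable w)
    (hwid : Integrable fun h ↦ w h * h) (hwu : Integrable fun h ↦ w h * u h)
    (hzero : ∫ h, w h = 0) (hone : ∫ h, w h * h = 0) : 0 ≤ ∫ h, w h * u h := by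
  have hsecant (h : ℝ) : w h * ((q - h) * u p + (h - p) * u q) =
      (q * u p - p * u q) * w h + (u q - u p) * (w h * h) := by ring
  have hle : ∫ h, ((q * u p - p * u q) * w h + (u q - u p) * (w h * h)) ≤
      ∫ h, (q - p) * (w h * u h) := by
    refine integral_mono ((hw.const_mul _).add (hwid.const_mul _)) (hwu.const_mul _) fun h ↦ ?_
    simpa only [hsecant] using mul_secant_le_of_cut hu hpq (hin h) (hout h)
  rw [integral_add (hw.const_mul _) (hwid.const_mul _), integral_const_mul, integral_const_mul,
    integral_const_mul, hzero, hone, mul_zero, mul_zero, add_zero] at hle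
  exact nonneg_of_mul_nonneg_right hle (sub_pos.2 hpq)

lemma setIntegral_Ioo_id (c m : ℝ) (hm : 0 ≤ m) :
    ∫ h in Ioo (c - m / 2) (c + m / 2), h = m * c := by
  rw [← integral_Ioc_eq_integral_Ioo, ← intervalIntegral.integral_of_le (by linarith), integral_id]
  ring

lemma setIntegral_Ioo_le_integral_mul {ψ u : ℝ → ℝ} (hψ : Integrable ψ)
    (h01 : ∀ h, ψ h ∈ Icc 0 1) {R : ℝ} (hR : ∀ h, R < |h| → ψ h = 0) {m c : ℝ} (hm : 0 < m)
    (hmass : ∫ h, ψ h = m) (hbary : ∫ h, ψ h * h = m * c) (hu : ConvexOn ℝ univ u) :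
    ∫ h in Ioo (c - m / 2) (c + m / 2), u h ≤ ∫ h, ψ h * u h := by
  set I := Ioo (c - m / 2) (c + m / 2)
  have huc : Continuous u := continuousOn_univ.1 (hu.continuousOn isOpen_univ)
  have hψ_int {v : ℝ → ℝ} (hv : Continuous v) : Integrable fun h ↦ ψ h * v h := by
    refine (integrableOn_iff_integrable_of_support_subset (s := Icc (-R) R) fun h hh ↦ ?_).1
      (hψ.integrableOn.mul_continuousOn hv.continuousOn isCompact_Icc)
    exact abs_le.1 (not_lt.1 fun hlt ↦ hh (by simp [hR h hlt]))
  have hI_int {v : ℝ → ℝ} (hv : Continuous v) : Integrable fun h ↦ I.indicator v h :=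
    (integrable_indicator_iff measurableSet_Ioo).2
      ((hv.continuousOn.integrableOn_Icc (a := c - m / 2) (b := c + m / 2)).mono_set
        Ioo_subset_Icc_self)
  have hw_mul (v : ℝ → ℝ) (h : ℝ) :
      (ψ h - I.indicator 1 h) * v h = ψ h * v h - I.indicator v h := by
    rw [sub_mul, ← indicator_mul_left]
    simp
  have hw_int {v : ℝ → ℝ} (hv : Continuous v) :
      Integrable fun h ↦ (ψ h - I.indicator 1 h) * v h := by
    simp only [hw_mul]
    exact (hψ_int hv).sub (hI_int hv)
  have hw_integral {v : ℝ → ℝ} (hv : Continuous v) :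
      ∫ h, (ψ h - I.indicator 1 h) * v h = (∫ h, ψ h * v h) - ∫ h in I, v h := by
    simp only [hw_mul]
    rw [integral_sub (hψ_int hv) (hI_int hv), integral_indicator measurableSet_Ioo]
  have hcut := integral_mul_nonneg_of_cut hu (p := c - m / 2) (q := c + m / 2) (by linarith)
    (w := fun h ↦ ψ h - I.indicator 1 h) (fun h hh ↦ ?_) (fun h hh ↦ ?_)
    (by simpa using hw_int (v := 1) continuous_one) (hw_int continuous_id) (hw_int huc) ?_ ?_
  · rwa [hw_integral huc, sub_nonneg] at hcut
  · simpa [I, hh] using (h01 h).2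
  · simpa [I, hh] using (h01 h).1
  · have hmassI : ∫ _ in I, (1 : ℝ) = m := by simp [I, hm.le]
    simpa [hmass, hmassI] using hw_integral (v := 1) continuous_one
  · have hbaryI : ∫ h in I, h = m * c := setIntegral_Ioo_id c m hm.le
    simpa [hbary, hbaryI] using hw_integral continuous_id

/-- The indicator of the open interval of length `m` centered at `0`, as a density; an infinite
length is read as `0`. -/
def centeredIndicator (m : ℝ≥0∞) (h : ℝ) : ℝ≥0∞ := if |h| < m.toReal / 2 then 1 else 0

@[fun_prop] lemma measurable_centeredIndicator {α : Type*} [MeasurableSpace α] {m : α → ℝ≥0∞}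
    {h : α → ℝ} (hm : Measurable m) (hh : Measurable h) :
    Measurable fun a ↦ centeredIndicator (m a) (h a) :=
  Measurable.ite (measurableSet_lt (by fun_prop) (by fun_prop)) measurable_const measurable_const

lemma centeredIndicator_neg (m : ℝ≥0∞) (h : ℝ) :
    centeredIndicator m (-h) = centeredIndicator m h := by
  simp [centeredIndicator]

lemma centeredIndicator_sub (m : ℝ≥0∞) (h c : ℝ) : centeredIndicator m (h - c) =
    (Ioo (c - m.toReal / 2) (c + m.toReal / 2)).indicator 1 h := by
  simp only [centeredIndicator, abs_sub_lt_iff, indicator_apply, mem_Ioo, Pi.one_apply]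
  congr 1
  rw [eq_iff_iff]
  constructor <;> rintro ⟨_, _⟩ <;> constructor <;> linarith

lemma lintegral_centeredIndicator {m : ℝ≥0∞} (hm : m ≠ ∞) : ∫⁻ h, centeredIndicator m h = m := by
  have hind (h : ℝ) := centeredIndicator_sub m h 0
  simp only [sub_zero] at hind
  simp only [hind]
  rw [lintegral_indicator_one measurableSet_Ioo, Real.volume_Ioo]
  ring_nf
  exact ENNReal.ofReal_toReal hm

lemma centeredIndicator_mono {m m' : ℝ≥0∞} (hmm' : m ≤ m') (hm' : m' ≠ ∞) (h : ℝ) :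
    centeredIndicator m h ≤ centeredIndicator m' h := by
  have hreal : m.toReal ≤ m'.toReal := ENNReal.toReal_mono hm' hmm'
  unfold centeredIndicator
  by_cases hh : |h| < m.toReal / 2
  · rw [if_pos hh, if_pos (by linarith)]
  · simp [hh]

lemma lintegral_centeredIndicator_sub {m m' : ℝ≥0∞} (hm : m ≠ ∞) (hm' : m' ≠ ∞) :
    ∫⁻ h, (centeredIndicator m h - centeredIndicator m' h) = m - m' := by
  rcases le_total m m' with hle | hle
  · simp [tsub_eq_zero_of_le hle, tsub_eq_zero_of_le (centeredIndicator_mono hle hm' _)]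
  · rw [lintegral_sub (by fun_prop), lintegral_centeredIndicator hm,
      lintegral_centeredIndicator hm']
    · rwa [lintegral_centeredIndicator hm']
    · exact ae_of_all _ (centeredIndicator_mono hle hm)

lemma lintegral_centeredIndicator_mul {m : ℝ≥0∞} {u : ℝ → ℝ} (hu : Continuous u)
    (hu0 : ∀ h, 0 ≤ u h) (c : ℝ) :
    ∫⁻ h, centeredIndicator m h * ENNReal.ofReal (u (h + c)) =
      ENNReal.ofReal (∫ h in Ioo (c - m.toReal / 2) (c + m.toReal / 2), u h) := by
  have hint : IntegrableOn u (Ioo (c - m.toReal / 2) (c + m.toReal / 2)) :=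
    hu.continuousOn.integrableOn_Icc.mono_set Ioo_subset_Icc_self
  rw [ofReal_integral_eq_lintegral_ofReal hint (ae_of_all _ hu0), ← lintegral_sub_right_eq_self _ c,
    ← lintegral_indicator measurableSet_Ioo]
  refine lintegral_congr fun h ↦ ?_
  simp only [centeredIndicator_sub, sub_add_cancel, indicator_apply, Pi.one_apply, ite_mul,
    one_mul, zero_mul]

lemma exists_lintegral_centeredIndicator_mul_le {φ : ℝ → ℝ≥0∞} (hφ : Measurable φ)
    (hφ1 : ∀ h, φ h ≤ 1) {R : ℝ} (hR : ∀ h, R < |h| → φ h = 0) :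
    ∃ c : ℝ, ∀ u : ℝ → ℝ, ConvexOn ℝ univ u → (∀ h, 0 ≤ u h) →
      ∫⁻ h, centeredIndicator (∫⁻ h, φ h) h * ENNReal.ofReal (u (h + c)) ≤
        ∫⁻ h, φ h * ENNReal.ofReal (u h) := by
  have hfin (h : ℝ) : φ h ≠ ∞ := ne_top_of_le_ne_top ENNReal.one_ne_top (hφ1 h)
  have hsupp : Function.support φ ⊆ Icc (-R) R := fun h hh ↦
    abs_le.1 (not_lt.1 fun hlt ↦ hh (hR h hlt))
  have hψ : Integrable fun h ↦ (φ h).toReal := by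
    refine integrable_toReal_of_lintegral_ne_top hφ.aemeasurable (ne_top_of_le_ne_top ?_
      (lintegral_mono fun h ↦ (indicator_eq_self.2 hsupp ▸ indicator_le_indicator (hφ1 h) :
        φ h ≤ (Icc (-R) R).indicator 1 h)))
    simp
  have hmass : ∫ h, (φ h).toReal = (∫⁻ h, φ h).toReal :=
    integral_toReal hφ.aemeasurable (ae_of_all _ fun h ↦ (hfin h).lt_top)
  rcases (ENNReal.toReal_nonneg (a := ∫⁻ h, φ h)).eq_or_lt with h0 | hpos
  · exact ⟨0, fun u _ _ ↦ by simp [centeredIndicator, ← h0, (abs_nonneg _).not_gt]⟩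
  refine ⟨(∫ h, (φ h).toReal * h) / (∫⁻ h, φ h).toReal, fun u hu hu0 ↦ ?_⟩
  have huc : Continuous u := continuousOn_univ.1 (hu.continuousOn isOpen_univ)
  rw [lintegral_centeredIndicator_mul huc hu0]
  refine (ENNReal.ofReal_le_ofReal (setIntegral_Ioo_le_integral_mul hψ
    (fun h ↦ ⟨ENNReal.toReal_nonneg, ENNReal.toReal_mono ENNReal.one_ne_top (hφ1 h)⟩)
    (R := R) (fun h hh ↦ by simp [hR h hh]) hpos hmass (mul_div_cancel₀ _ hpos.ne').symm
    hu)).trans ?_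
  rw [integral_eq_lintegral_of_nonneg_ae (ae_of_all _ fun h ↦ mul_nonneg ENNReal.toReal_nonneg
    (hu0 h)) (hψ.aestronglyMeasurable.mul huc.aestronglyMeasurable)]
  refine ENNReal.ofReal_toReal_le.trans_eq (lintegral_congr fun h ↦ ?_)
  rw [ENNReal.ofReal_mul ENNReal.toReal_nonneg, ENNReal.ofReal_toReal (hfin h)]

lemma convexOn_comp_mul_add {u : ℝ → ℝ} (hu : ConvexOn ℝ univ u) (a b : ℝ) :
    ConvexOn ℝ univ fun t ↦ u (a * t + b) := by
  refine ⟨convex_univ, fun x _ y _ s t hs ht hst ↦ ?_⟩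
  convert hu.2 (mem_univ (a * x + b)) (mem_univ (a * y + b)) hs ht hst using 2
  simp only [smul_eq_mul]
  linear_combination (-b) * hst

lemma lintegral_mul_lintegral_swap {X Y : Type*} [MeasurableSpace X] [MeasurableSpace Y]
    {μ : Measure X} {ν : Measure Y} [SFinite μ] [SFinite ν] {p : X → ℝ≥0∞} {q : Y → ℝ≥0∞}
    {K : X × Y → ℝ≥0∞} (hp : Measurable p) (hq : Measurable q) (hK : Measurable K) :
    ∫⁻ x, p x * ∫⁻ y, q y * K (x, y) ∂ν ∂μ = ∫⁻ y, q y * ∫⁻ x, p x * K (x, y) ∂μ ∂ν := by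
  calc _ = ∫⁻ x, ∫⁻ y, p x * (q y * K (x, y)) ∂ν ∂μ :=
        lintegral_congr fun x ↦ (lintegral_const_mul _ (by fun_prop)).symm
    _ = ∫⁻ y, ∫⁻ x, q y * (p x * K (x, y)) ∂μ ∂ν := by
        rw [lintegral_lintegral_swap (by fun_prop)]
        simp only [mul_left_comm]
    _ = _ := lintegral_congr fun y ↦ lintegral_const_mul _ (by fun_prop)

lemma lintegral_lintegral_mul_convex_le {X : Type*} [MeasurableSpace X] {μ : Measure X} [SFinite μ]
    {φ φ' : ℝ → ℝ≥0∞} (hφ : Measurable φ) (hφ' : Measurable φ') {b b' : X → ℝ≥0∞}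
    (hb' : Measurable b') {s : X → ℝ} (hs : Measurable s) {a c₀ c : ℝ}
    (hline : ∀ u : ℝ → ℝ, ConvexOn ℝ univ u → (∀ h, 0 ≤ u h) →
      ∫⁻ t, φ' t * ENNReal.ofReal (u (t + c₀)) ≤ ∫⁻ t, φ t * ENNReal.ofReal (u t))
    (hrest : ∀ u : ℝ → ℝ, ConvexOn ℝ univ u → (∀ h, 0 ≤ u h) →
      ∫⁻ x, b' x * ENNReal.ofReal (u (s x + c)) ∂μ ≤ ∫⁻ x, b x * ENNReal.ofReal (u (s x)) ∂μ)
    {u : ℝ → ℝ} (hu : ConvexOn ℝ univ u) (hu0 : ∀ h, 0 ≤ u h) :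
    ∫⁻ t, φ' t * ∫⁻ x, b' x * ENNReal.ofReal (u (a * t + s x + (a * c₀ + c))) ∂μ ≤
      ∫⁻ t, φ t * ∫⁻ x, b x * ENNReal.ofReal (u (a * t + s x)) ∂μ := by
  have hum : Measurable u := (continuousOn_univ.1 (hu.continuousOn isOpen_univ)).measurable
  calc
    _ = ∫⁻ x, b' x * (∫⁻ t, φ' t * ENNReal.ofReal (u (a * (t + c₀) + (s x + c)))) ∂μ := by
        rw [lintegral_mul_lintegral_swap hφ' hb' (K := fun q ↦
          ENNReal.ofReal (u (a * q.1 + s q.2 + (a * c₀ + c)))) (by fun_prop)]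
        simp only [mul_add, add_add_add_comm]
    _ ≤ ∫⁻ x, b' x * (∫⁻ t, φ t * ENNReal.ofReal (u (a * t + (s x + c)))) ∂μ :=
        lintegral_mono fun x ↦
          mul_le_mul_right (hline _ (convexOn_comp_mul_add hu a (s x + c)) fun _ ↦ hu0 _) _
    _ = ∫⁻ t, φ t * ∫⁻ x, b' x * ENNReal.ofReal (u (1 * (s x + c) + a * t)) ∂μ := by
        rw [← lintegral_mul_lintegral_swap hφ hb' (K := fun q ↦
          ENNReal.ofReal (u (a * q.1 + (s q.2 + c)))) (by fun_prop)]
        simp only [one_mul, add_comm]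
    _ ≤ ∫⁻ t, φ t * ∫⁻ x, b x * ENNReal.ofReal (u (1 * s x + a * t)) ∂μ :=
        lintegral_mono fun t ↦
          mul_le_mul_right (hrest _ (convexOn_comp_mul_add hu 1 (a * t)) fun _ ↦ hu0 _) _
    _ = _ := by simp only [one_mul, add_comm]

lemma exists_lintegral_prod_centeredIndicator_mul_le {N : ℕ} {φ : Fin N → ℝ → ℝ≥0∞}
    (hφ : ∀ i, Measurable (φ i)) (hφ1 : ∀ i h, φ i h ≤ 1) {R : ℝ}
    (hR : ∀ i h, R < |h| → φ i h = 0) (a : Fin N → ℝ) :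
    ∃ c : ℝ, ∀ u : ℝ → ℝ, ConvexOn ℝ univ u → (∀ h, 0 ≤ u h) →
      ∫⁻ h : Fin N → ℝ, (∏ i, centeredIndicator (∫⁻ h, φ i h) (h i)) *
          ENNReal.ofReal (u (∑ i, a i * h i + c)) ≤
        ∫⁻ h : Fin N → ℝ, (∏ i, φ i (h i)) * ENNReal.ofReal (u (∑ i, a i * h i)) := by
  induction N with
  | zero => exact ⟨0, fun u _ _ ↦ by simp⟩
  | succ N ih =>
    obtain ⟨c, hc⟩ := ih (fun i ↦ hφ i.succ) (fun i ↦ hφ1 i.succ) (fun i ↦ hR i.succ)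
      (fun i ↦ a i.succ)
    obtain ⟨c₀, hc₀⟩ := exists_lintegral_centeredIndicator_mul_le (hφ 0) (hφ1 0) (hR 0)
    refine ⟨a 0 * c₀ + c, fun u hu hu0 ↦ ?_⟩
    have hum : Measurable u := (continuousOn_univ.1 (hu.continuousOn isOpen_univ)).measurable
    have hsplit {ψ : Fin (N + 1) → ℝ → ℝ≥0∞} (hψ : ∀ i, Measurable (ψ i)) (c : ℝ) :
        ∫⁻ h : Fin (N + 1) → ℝ, (∏ i, ψ i (h i)) * ENNReal.ofReal (u (∑ i, a i * h i + c)) =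
          ∫⁻ t, ψ 0 t * ∫⁻ x : Fin N → ℝ, (∏ i, ψ i.succ (x i)) *
            ENNReal.ofReal (u (a 0 * t + ∑ i, a i.succ * x i + c)) := by
      rw [lintegral_pi_succ (by fun_prop)]
      simp only [Fin.prod_univ_succ, Fin.sum_univ_succ, Fin.cons_zero, Fin.cons_succ, mul_assoc]
      exact lintegral_congr fun t ↦ lintegral_const_mul _ (by fun_prop)
    have hφsplit := hsplit hφ 0
    simp only [add_zero] at hφsplit
    rw [hsplit (fun i ↦ by fun_prop), hφsplit]
    exact lintegral_lintegral_mul_convex_le (hφ 0) (by fun_prop) (by fun_prop) (by fun_prop)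
      hc₀ hc hu hu0

lemma lintegral_prod_centeredIndicator_mul_le_add {N : ℕ} (m : Fin N → ℝ≥0∞) (a : Fin N → ℝ)
    {u : ℝ → ℝ} (hu : ConvexOn ℝ univ u) (hu0 : ∀ h, 0 ≤ u h) (hu_even : ∀ h, u (-h) = u h)
    (c : ℝ) :
    ∫⁻ h : Fin N → ℝ, (∏ i, centeredIndicator (m i) (h i)) *
        ENNReal.ofReal (u (∑ i, a i * h i)) ≤
      ∫⁻ h : Fin N → ℝ, (∏ i, centeredIndicator (m i) (h i)) *
        ENNReal.ofReal (u (∑ i, a i * h i + c)) := by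
  have hum : Measurable u := (continuousOn_univ.1 (hu.continuousOn isOpen_univ)).measurable
  set b : (Fin N → ℝ) → ℝ≥0∞ := fun h ↦ ∏ i, centeredIndicator (m i) (h i)
  set s : (Fin N → ℝ) → ℝ := fun h ↦ ∑ i, a i * h i
  have hb : Measurable b := by fun_prop
  have hs : Measurable s := by fun_prop
  have hreflect : ∫⁻ h, b h * ENNReal.ofReal (u (s h + c)) =
      ∫⁻ h, b h * ENNReal.ofReal (u (s h - c)) := by
    rw [← lintegral_neg_eq_self]
    refine lintegral_congr fun h ↦ ?_
    have hbneg : b (-h) = b h := by simp [b, centeredIndicator_neg]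
    have hsneg : s (-h) = -s h := by simp [s]
    rw [hbneg, hsneg, ← hu_even]
    ring_nf
  have hmid (t : ℝ) : 2 * ENNReal.ofReal (u t) ≤
      ENNReal.ofReal (u (t + c)) + ENNReal.ofReal (u (t - c)) := by
    have hconv := hu.2 (mem_univ (t + c)) (mem_univ (t - c)) one_half_pos.le
      one_half_pos.le (add_halves 1)
    rw [← ENNReal.ofReal_add (hu0 _) (hu0 _), ← ENNReal.ofReal_ofNat, ←
      ENNReal.ofReal_mul zero_le_two]
    refine ENNReal.ofReal_le_ofReal ?_
    simp only [smul_eq_mul] at hconv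
    ring_nf at hconv ⊢
    linarith
  have htwo : 2 * ∫⁻ h, b h * ENNReal.ofReal (u (s h)) ≤
      2 * ∫⁻ h, b h * ENNReal.ofReal (u (s h + c)) := by
    rw [two_mul (∫⁻ h, b h * ENNReal.ofReal (u (s h + c)))]
    nth_rewrite 2 [hreflect]
    rw [← lintegral_const_mul _ (by fun_prop), ← lintegral_add_left (by fun_prop)]
    refine lintegral_mono fun h ↦ ?_
    dsimp only
    rw [← mul_add, mul_left_comm]
    exact mul_le_mul_right (hmid _) _
  exact (ENNReal.mul_le_mul_iff_right two_ne_zero ENNReal.ofNat_ne_top).1 htwo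

theorem lintegral_prod_centeredIndicator_mul_le {N : ℕ} {φ : Fin N → ℝ → ℝ≥0∞}
    (hφ : ∀ i, Measurable (φ i)) (hφ1 : ∀ i h, φ i h ≤ 1) {R : ℝ}
    (hR : ∀ i h, R < |h| → φ i h = 0) (a : Fin N → ℝ) {u : ℝ → ℝ} (hu : ConvexOn ℝ univ u)
    (hu0 : ∀ h, 0 ≤ u h) (hu_even : ∀ h, u (-h) = u h) :
    ∫⁻ h : Fin N → ℝ, (∏ i, centeredIndicator (∫⁻ h, φ i h) (h i)) *
        ENNReal.ofReal (u (∑ i, a i * h i)) ≤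
      ∫⁻ h : Fin N → ℝ, (∏ i, φ i (h i)) * ENNReal.ofReal (u (∑ i, a i * h i)) := by
  obtain ⟨c, hc⟩ := exists_lintegral_prod_centeredIndicator_mul_le hφ hφ1 hR a
  exact (lintegral_prod_centeredIndicator_mul_le_add _ a hu hu0 hu_even c).trans (hc u hu hu0)

end Bathtub

section Simplex

variable {d k : ℕ}

/-- The matrix with rows `(1, Y i)`; its determinant is `± d!` times the volume of the simplex with
vertices `Y i`. -/
def simplexMatrix (Y : Fin (d + 1) → E d) : Matrix (Fin (d + 1)) (Fin (d + 1)) ℝ :=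
  Matrix.of fun i j ↦ E.cons 1 (Y i) j

@[fun_prop] lemma continuous_det_simplexMatrix :
    Continuous fun Y : Fin (d + 1) → E d ↦ (simplexMatrix Y).det := by
  refine Continuous.matrix_det (continuous_matrix fun i j ↦ ?_)
  simp only [simplexMatrix, Matrix.of_apply]
  fun_prop

@[fun_prop] lemma measurable_det_simplexMatrix :
    Measurable fun Y : Fin (d + 1) → E d ↦ (simplexMatrix Y).det :=
  continuous_det_simplexMatrix.measurable

lemma exists_det_simplexMatrix_cons_eq_sum (z : Fin (k + 2) → E k) :
    ∃ a : Fin (k + 2) → ℝ, ∀ h : Fin (k + 2) → ℝ,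
      (simplexMatrix fun i ↦ E.cons (h i) (z i)).det = ∑ i, a i * h i := by
  refine ⟨fun i ↦ (-1) ^ (i + 1 : ℕ) * ((simplexMatrix fun i ↦ E.cons 0 (z i)).submatrix
    i.succAbove (Fin.succAbove 1)).det, fun h ↦ ?_⟩
  rw [Matrix.det_succ_column _ 1]
  refine Finset.sum_congr rfl fun i _ ↦ ?_
  have hentry : simplexMatrix (fun i ↦ E.cons (h i) (z i)) i 1 = h i := rfl
  have hminor : (simplexMatrix fun i ↦ E.cons (h i) (z i)).submatrix i.succAbove (Fin.succAbove 1) =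
      (simplexMatrix fun i ↦ E.cons 0 (z i)).submatrix i.succAbove (Fin.succAbove 1) := by
    ext i' j
    refine Fin.cases rfl (fun j ↦ ?_) j
    simp [simplexMatrix, Fin.succAbove_of_lt_succ, Fin.lt_def]
  rw [hentry, hminor, mul_right_comm]
  rfl

lemma det_simplexMatrix_affine (A : E d →ₗ[ℝ] E d) (c : E d) (Y : Fin (d + 1) → E d) :
    (simplexMatrix fun i ↦ A (Y i) + c).det = (simplexMatrix Y).det * LinearMap.det A := by
  set T := Matrix.toEuclideanLin.symm A
  have hA : A = Matrix.toEuclideanLin T := (Matrix.toEuclideanLin.apply_symm_apply A).symm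
  set B : Matrix (Fin (d + 1)) (Fin (d + 1)) ℝ :=
    Matrix.of (Fin.cons (Fin.cons 1 c) fun l ↦ Fin.cons 0 fun j ↦ T j l)
  have hB : B.det = LinearMap.det A := by
    have hminor : B.submatrix (Fin.succAbove 0) Fin.succ = T.transpose := by
      ext i j; simp [B]
    rw [hA, LinearMap.det_toLpLin, Matrix.det_succ_column_zero, Fin.sum_univ_succ, hminor]
    simp [B]
  have hmul : simplexMatrix (fun i ↦ A (Y i) + c) = simplexMatrix Y * B := by
    ext i j
    rw [Matrix.mul_apply, Fin.sum_univ_succ]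
    refine Fin.cases (by simp [simplexMatrix, B]) (fun j ↦ ?_) j
    simp [simplexMatrix, B, hA, Matrix.mulVec, dotProduct, add_comm, mul_comm]
  rw [hmul, Matrix.det_mul, hB]

lemma lintegral_affine {V : Type*} [NormedAddCommGroup V] [NormedSpace ℝ V] [MeasurableSpace V]
    [BorelSpace V] [FiniteDimensional ℝ V] (μ : Measure V) [μ.IsAddHaarMeasure]
    (A : V →ₗ[ℝ] V) (hA : LinearMap.det A ≠ 0) (c : V) {F : V → ℝ≥0∞} (hF : Measurable F) :
    ENNReal.ofReal |LinearMap.det A| * ∫⁻ x, F (A x + c) ∂μ = ∫⁻ x, F x ∂μ := by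
  have hAm : Measurable A := A.continuous_of_finiteDimensional.measurable
  rw [← lintegral_map (f := fun y ↦ F (y + c)) (by fun_prop) hAm,
    Measure.map_linearMap_addHaar_eq_smul_addHaar μ hA, lintegral_smul_measure,
    lintegral_add_right_eq_self, smul_eq_mul, ← mul_assoc, ← ENNReal.ofReal_mul (abs_nonneg _),
    ← abs_mul, mul_inv_cancel₀ hA, abs_one, ENNReal.ofReal_one, one_mul]

/-- The integral, against the product of the densities `g (Y i)`, of `d!` times the volume of the
simplex with vertices `Y i`. -/
def simplexMoment (g : E d → ℝ≥0∞) : ℝ≥0∞ :=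
  ∫⁻ Y : Fin (d + 1) → E d, (∏ i, g (Y i)) * ENNReal.ofReal |(simplexMatrix Y).det|

lemma simplexMoment_mono {g g' : E d → ℝ≥0∞} (h : ∀ x, g x ≤ g' x) :
    simplexMoment g ≤ simplexMoment g' :=
  lintegral_mono fun _ ↦ mul_le_mul_left (Finset.prod_le_prod' fun _ _ ↦ h _) _

lemma simplexMoment_const_mul {g : E d → ℝ≥0∞} (hg : Measurable g) (c : ℝ≥0∞) :
    simplexMoment (fun x ↦ c * g x) = c ^ (d + 1) * simplexMoment g := by
  unfold simplexMoment
  rw [← lintegral_const_mul _ (by fun_prop)]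
  simp [Finset.prod_mul_distrib, mul_assoc]

lemma simplexMoment_affine (A : E d →ₗ[ℝ] E d) (hA : LinearMap.det A ≠ 0) (c : E d)
    {g : E d → ℝ≥0∞} (hg : Measurable g) :
    ENNReal.ofReal |LinearMap.det A| ^ (d + 2) * simplexMoment (fun x ↦ g (A x + c)) =
      simplexMoment g := by
  set L : (Fin (d + 1) → E d) →ₗ[ℝ] (Fin (d + 1) → E d) :=
    LinearMap.pi fun i ↦ A ∘ₗ LinearMap.proj i
  have hdet : LinearMap.det L = LinearMap.det A ^ (d + 1) := by simp [L, LinearMap.det_pi]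
  have hL (Y : Fin (d + 1) → E d) : L Y + (fun _ ↦ c) = fun i ↦ A (Y i) + c := rfl
  have hAm : Measurable A := A.continuous_of_finiteDimensional.measurable
  unfold simplexMoment
  rw [← lintegral_affine volume L (hdet ▸ pow_ne_zero _ hA) (fun _ ↦ c)
    (F := fun Y ↦ (∏ i, g (Y i)) * ENNReal.ofReal |(simplexMatrix Y).det|) (by fun_prop)]
  simp only [hL, det_simplexMatrix_affine, abs_mul, ENNReal.ofReal_mul (abs_nonneg _)]
  rw [hdet, abs_pow, ENNReal.ofReal_pow (abs_nonneg _), pow_succ _ (d + 1), mul_assoc,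
    ← lintegral_const_mul _ (by fun_prop)]
  refine congrArg _ (lintegral_congr fun Y ↦ ?_)
  ring

end Simplex

section Symmetrization

variable {d k : ℕ}

lemma cons_mem_ball_iff {r : ℝ} (hr : 0 ≤ r) (h : ℝ) (z : E k) :
    E.cons h z ∈ ball 0 r ↔ |h| < √(r ^ 2 - ‖z‖ ^ 2) := by
  rw [mem_ball_zero_iff, Real.lt_sqrt (abs_nonneg _), sq_abs, ← sq_lt_sq₀ (norm_nonneg _) hr,
    E.norm_sq_cons, lt_sub_iff_add_lt]

/-- The length of the chord that the ball of radius `r` cuts out of the line over `z`. -/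
def chordLength (r : ℝ) (z : E k) : ℝ≥0∞ := ENNReal.ofReal (2 * √(r ^ 2 - ‖z‖ ^ 2))

lemma chordLength_ne_top (r : ℝ) (z : E k) : chordLength r z ≠ ∞ := ENNReal.ofReal_ne_top

lemma chordLength_le {r R : ℝ} (hr : 0 ≤ r) (hrR : r ≤ R) (z : E k) :
    chordLength r z ≤ ENNReal.ofReal (2 * R) := by
  refine ENNReal.ofReal_le_ofReal (mul_le_mul_of_nonneg_left ?_ zero_le_two)
  refine (Real.sqrt_le_left (hr.trans hrR)).2 ?_
  linarith [pow_le_pow_left₀ hr hrR 2, sq_nonneg ‖z‖]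

lemma indicator_ball_cons {r : ℝ} (hr : 0 ≤ r) (h : ℝ) (z : E k) :
    (ball 0 r).indicator 1 (E.cons h z) = centeredIndicator (chordLength r z) h := by
  have hmem : E.cons h z ∈ ball 0 r ↔ |h| < (chordLength r z).toReal / 2 := by
    simp [cons_mem_ball_iff hr, chordLength]
  by_cases hh : |h| < (chordLength r z).toReal / 2
  · simp [centeredIndicator, hmem.2 hh, hh]
  · simp [centeredIndicator, mt hmem.1 hh, hh]

/-- The integral of `F` over the line over `z` parallel to the first axis. -/
def lineMass (F : E (k + 1) → ℝ≥0∞) (z : E k) : ℝ≥0∞ := ∫⁻ h, F (E.cons h z)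

@[fun_prop] lemma measurable_lineMass {F : E (k + 1) → ℝ≥0∞} (hF : Measurable F) :
    Measurable (lineMass F) :=
  Measurable.lintegral_prod_right' (f := fun p : E k × ℝ ↦ F (E.cons p.2 p.1)) (by fun_prop)

lemma lintegral_lineMass {F : E (k + 1) → ℝ≥0∞} (hF : Measurable F) :
    ∫⁻ z, lineMass F z = ∫⁻ x, F x :=
  (E.lintegral_cons_symm hF).symm

lemma lineMass_le_chordLength {g : E (k + 1) → ℝ≥0∞} {r : ℝ} (hr : 0 ≤ r)
    (hg : ∀ x, g x ≤ (ball 0 r).indicator 1 x) (z : E k) :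
    lineMass g z ≤ chordLength r z := by
  refine (lintegral_mono fun h ↦ hg _).trans_eq ?_
  simp only [indicator_ball_cons hr]
  exact lintegral_centeredIndicator (chordLength_ne_top r z)

/-- Steiner symmetrization in the first coordinate combined with a bathtub rearrangement: on each
line parallel to the first axis `g` is replaced by the indicator of a centered interval of the same
mass. -/
def steinerBathtub (g : E (k + 1) → ℝ≥0∞) : E (k + 1) → ℝ≥0∞ :=
  fun x ↦ centeredIndicator (lineMass g (E.tail x)) (x 0)

lemma steinerBathtub_cons (g : E (k + 1) → ℝ≥0∞) (h : ℝ) (z : E k) :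
    steinerBathtub g (E.cons h z) = centeredIndicator (lineMass g z) h := by
  simp [steinerBathtub]

lemma measurable_steinerBathtub {g : E (k + 1) → ℝ≥0∞} (hg : Measurable g) :
    Measurable (steinerBathtub g) :=
  measurable_centeredIndicator ((measurable_lineMass hg).comp E.measurable_tail)
    (by fun_prop)

lemma simplexMoment_steinerBathtub_le {g : E (k + 1) → ℝ≥0∞} (hg : Measurable g) {R : ℝ}
    (hgR : ∀ x, g x ≤ (ball 0 R).indicator 1 x) :
    simplexMoment (steinerBathtub g) ≤ simplexMoment g := by
  have hst := measurable_steinerBathtub hg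
  unfold simplexMoment
  rw [E.lintegral_pi_cons (by fun_prop), E.lintegral_pi_cons (by fun_prop)]
  refine lintegral_mono fun z ↦ ?_
  obtain ⟨a, ha⟩ := exists_det_simplexMatrix_cons_eq_sum z
  simp only [ha, steinerBathtub_cons]
  refine lintegral_prod_centeredIndicator_mul_le (φ := fun i h ↦ g (E.cons h (z i)))
    (fun i ↦ by fun_prop) (fun i h ↦ (hgR _).trans (Set.indicator_le_self _ _ _)) (R := R)
    (fun i h hh ↦ ?_) a convexOn_univ_norm abs_nonneg abs_neg
  have hout : E.cons h (z i) ∉ ball 0 R := by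
    simpa using hh.le.trans (E.abs_le_norm_cons h (z i))
  simpa [hout] using hgR (E.cons h (z i))

/-- The densities with values in `[0, 1]`, supported in the ball of radius `R`, which have the same
mass as the ball of radius `r`. -/
structure IsAdmissible (R r : ℝ) (g : E d → ℝ≥0∞) : Prop where
  radius_pos : 0 < r
  radius_le : r ≤ R
  measurable : Measurable g
  le_indicator : ∀ x, g x ≤ (ball 0 R).indicator 1 x
  lintegral_eq : ∫⁻ x, g x = volume (ball (0 : E d) r)

/-- The part of `g` outside the ball of radius `r`. -/
def excess (r : ℝ) (g : E d → ℝ≥0∞) : E d → ℝ≥0∞ := (ball 0 r)ᶜ.indicator g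

/-- The part of the indicator of the ball of radius `r` that is missing in `g`. -/
def deficit (r : ℝ) (g : E d → ℝ≥0∞) : E d → ℝ≥0∞ := (ball 0 r).indicator fun x ↦ 1 - g x

/-- The mass of `g` outside the ball of radius `r`. -/
def excessMass (r : ℝ) (g : E d → ℝ≥0∞) : ℝ≥0∞ := ∫⁻ x, excess r g x

@[fun_prop] lemma measurable_excess (r : ℝ) {g : E d → ℝ≥0∞} (hg : Measurable g) :
    Measurable (excess r g) :=
  hg.indicator measurableSet_ball.compl

@[fun_prop] lemma measurable_deficit (r : ℝ) {g : E d → ℝ≥0∞} (hg : Measurable g) :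
    Measurable (deficit r g) :=
  (measurable_const.sub hg).indicator measurableSet_ball

lemma deficit_le_indicator (r : ℝ) (g : E d → ℝ≥0∞) (x : E d) :
    deficit r g x ≤ (ball 0 r).indicator 1 x :=
  Set.indicator_le_indicator tsub_le_self

namespace IsAdmissible

variable {R r : ℝ} {g : E d → ℝ≥0∞}

lemma le_one (hg : IsAdmissible R r g) (x : E d) : g x ≤ 1 :=
  (hg.le_indicator x).trans (Set.indicator_le_self _ _ _)

lemma add_deficit (hg : IsAdmissible R r g) (x : E d) :
    g x + deficit r g x = excess r g x + (ball 0 r).indicator 1 x := by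
  by_cases hx : x ∈ ball (0 : E d) r
  · simp only [excess, deficit, hx, Set.indicator_of_mem, Set.mem_compl_iff, not_true_eq_false,
      not_false_eq_true, Set.indicator_of_notMem, zero_add, Pi.one_apply]
    exact add_tsub_cancel_of_le (hg.le_one x)
  · simp [excess, deficit, hx]

lemma lintegral_deficit (hg : IsAdmissible R r g) : ∫⁻ x, deficit r g x = excessMass r g := by
  have hadd := lintegral_congr (μ := volume) hg.add_deficit
  rw [lintegral_add_left hg.measurable, lintegral_add_left (measurable_excess r hg.measurable),
    lintegral_indicator_one measurableSet_ball, hg.lintegral_eq, add_comm] at hadd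
  exact (ENNReal.add_left_inj measure_ball_lt_top.ne).1 hadd

variable {g : E (k + 1) → ℝ≥0∞}

lemma lineMass_le (hg : IsAdmissible R r g) (z : E k) : lineMass g z ≤ chordLength R z :=
  lineMass_le_chordLength (hg.radius_pos.le.trans hg.radius_le) hg.le_indicator z

lemma lineMass_ne_top (hg : IsAdmissible R r g) (z : E k) : lineMass g z ≠ ∞ :=
  ne_top_of_le_ne_top (chordLength_ne_top R z) (hg.lineMass_le z)

lemma lineMass_add_deficit (hg : IsAdmissible R r g) (z : E k) :
    lineMass g z + lineMass (deficit r g) z = lineMass (excess r g) z + chordLength r z := by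
  have hm := hg.measurable
  have hadd : ∫⁻ h, (g (E.cons h z) + deficit r g (E.cons h z)) =
      ∫⁻ h, (excess r g (E.cons h z) + (ball 0 r).indicator 1 (E.cons h z)) :=
    lintegral_congr fun h ↦ hg.add_deficit _
  rw [lintegral_add_left (by fun_prop), lintegral_add_left (by fun_prop)] at hadd
  simp only [indicator_ball_cons hg.radius_pos.le] at hadd
  rwa [lintegral_centeredIndicator (chordLength_ne_top r z)] at hadd

protected lemma steinerBathtub (hg : IsAdmissible R r g) : IsAdmissible R r (steinerBathtub g) where
  radius_pos := hg.radius_pos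
  radius_le := hg.radius_le
  measurable := measurable_steinerBathtub hg.measurable
  le_indicator x := by
    rw [← E.cons_tail x, indicator_ball_cons (hg.radius_pos.le.trans hg.radius_le),
      steinerBathtub_cons]
    exact centeredIndicator_mono (hg.lineMass_le _) (chordLength_ne_top _ _) _
  lintegral_eq := by
    rw [← hg.lintegral_eq, ← lintegral_lineMass (measurable_steinerBathtub hg.measurable),
      ← lintegral_lineMass hg.measurable]
    simp only [lineMass, steinerBathtub_cons]
    exact lintegral_congr fun z ↦ lintegral_centeredIndicator (hg.lineMass_ne_top z)

lemma lineMass_excess_steinerBathtub (hg : IsAdmissible R r g) (z : E k) :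
    lineMass (excess r (steinerBathtub g)) z = lineMass g z - chordLength r z := by
  have hpt (h : ℝ) : excess r (steinerBathtub g) (E.cons h z) =
      centeredIndicator (lineMass g z) h - centeredIndicator (chordLength r z) h := by
    rw [← indicator_ball_cons hg.radius_pos.le, ← steinerBathtub_cons]
    by_cases hh : E.cons h z ∈ ball 0 r
    · simp [excess, hh, tsub_eq_zero_of_le (hg.steinerBathtub.le_one _)]
    · simp [excess, hh]
  exact (lintegral_congr hpt).trans <| lintegral_centeredIndicator_sub (hg.lineMass_ne_top z)
    (chordLength_ne_top r z)

lemma lineMass_excess_steinerBathtub_add_min_le (hg : IsAdmissible R r g) (z : E k) :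
    lineMass (excess r (steinerBathtub g)) z +
        min (lineMass (excess r g) z) (lineMass (deficit r g) z) ≤
      lineMass (excess r g) z := by
  rw [hg.lineMass_excess_steinerBathtub]
  rcases le_total (lineMass g z) (chordLength r z) with hle | hle
  · rw [tsub_eq_zero_of_le hle, zero_add]
    exact min_le_left _ _
  refine (add_le_add_right (min_le_right _ _) _).trans (le_of_eq ?_)
  rw [← ENNReal.add_left_inj (chordLength_ne_top r z), add_right_comm, tsub_add_cancel_of_le hle,
    hg.lineMass_add_deficit]

lemma lineMass_excess_steinerBathtub_add_le (hg : IsAdmissible R r g) (z : E k) :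
    ENNReal.ofReal (2 * R) * lineMass (excess r (steinerBathtub g)) z +
        lineMass (excess r g) z * lineMass (deficit r g) z ≤
      ENNReal.ofReal (2 * R) * lineMass (excess r g) z := by
  have hexcess : lineMass (excess r g) z ≤ ENNReal.ofReal (2 * R) :=
    (lintegral_mono fun h ↦ Set.indicator_le_self _ _ _).trans ((hg.lineMass_le z).trans
      (chordLength_le (hg.radius_pos.le.trans hg.radius_le) le_rfl z))
  have hdeficit : lineMass (deficit r g) z ≤ ENNReal.ofReal (2 * R) :=
    (lineMass_le_chordLength hg.radius_pos.le (deficit_le_indicator r g) z).trans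
      (chordLength_le hg.radius_pos.le hg.radius_le z)
  refine le_trans ?_
    (mul_le_mul_right (hg.lineMass_excess_steinerBathtub_add_min_le z) _)
  rw [mul_add, ← max_mul_min (lineMass (excess r g) z)]
  exact add_le_add_right (mul_le_mul_left (max_le hexcess hdeficit) _) _

end IsAdmissible

/-- The interaction of excess and deficit along the lines of direction `u`; it bounds from below the
decrease of `excessMass` under symmetrization in direction `u`. -/
def lineInteraction (r : ℝ) (g : E d → ℝ≥0∞) (u : E d) : ℝ≥0∞ :=
  ∫⁻ x, excess r g x * ∫⁻ s : ℝ, deficit r g (x + s • u)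

lemma lineInteraction_cons_one_zero (r : ℝ) {g : E (k + 1) → ℝ≥0∞} (hg : Measurable g) :
    lineInteraction r g (E.cons 1 0) =
      ∫⁻ z, lineMass (excess r g) z * lineMass (deficit r g) z := by
  have hline : Measurable fun x ↦ ∫⁻ s : ℝ, deficit r g (x + s • E.cons 1 0) :=
    Measurable.lintegral_prod_right' (f := fun p : E (k + 1) × ℝ ↦
      deficit r g (p.1 + p.2 • E.cons 1 0)) (by fun_prop)
  have hshift (h s : ℝ) (z : E k) : E.cons h z + s • E.cons 1 0 = E.cons (h + s) z := by
    rw [← E.cons_smul, ← E.cons_add, mul_one, smul_zero, add_zero]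
  rw [lineInteraction, E.lintegral_cons_symm (by fun_prop)]
  refine lintegral_congr fun z ↦ ?_
  simp only [hshift, lintegral_add_left_eq_self fun s ↦ deficit r g (E.cons s z)]
  exact lintegral_mul_const _ (by fun_prop)

lemma IsAdmissible.excessMass_steinerBathtub_add_le {R r : ℝ} {g : E (k + 1) → ℝ≥0∞}
    (hg : IsAdmissible R r g) :
    ENNReal.ofReal (2 * R) * excessMass r (steinerBathtub g) +
        lineInteraction r g (E.cons 1 0) ≤ ENNReal.ofReal (2 * R) * excessMass r g := by
  have hp := measurable_excess r hg.measurable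
  have hp' := measurable_excess r hg.steinerBathtub.measurable
  rw [lineInteraction_cons_one_zero r hg.measurable, excessMass, excessMass,
    ← lintegral_lineMass hp', ← lintegral_lineMass hp,
    ← lintegral_const_mul _ (measurable_lineMass hp'),
    ← lintegral_const_mul _ (measurable_lineMass hp),
    ← lintegral_add_left ((measurable_lineMass hp').const_mul _)]
  exact lintegral_mono hg.lineMass_excess_steinerBathtub_add_le

end Symmetrization

section Polar

variable {V : Type*} [NormedAddCommGroup V] [NormedSpace ℝ V] [FiniteDimensional ℝ V]
  [Nontrivial V] [MeasurableSpace V] [BorelSpace V]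

lemma lintegral_eq_lintegral_toSphere (μ : Measure V) [μ.IsAddHaarMeasure] {F : V → ℝ≥0∞}
    (hF : Measurable F) :
    ∫⁻ x, F x ∂μ = ∫⁻ θ, (∫⁻ s in Set.Ioi (0 : ℝ),
      ENNReal.ofReal (s ^ (Module.finrank ℝ V - 1)) * F (s • (θ : V))) ∂μ.toSphere := by
  have hsymm (x : ({0}ᶜ : Set V)) : (homeomorphUnitSphereProd V x).2.1 •
      ((homeomorphUnitSphereProd V x).1 : V) = x :=
    congrArg Subtype.val ((homeomorphUnitSphereProd V).symm_apply_apply x)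
  have hpolar := μ.measurePreserving_homeomorphUnitSphereProd.lintegral_comp
    (f := fun p ↦ F (p.2.1 • (p.1 : V))) (by fun_prop)
  simp only [hsymm] at hpolar
  calc ∫⁻ x, F x ∂μ = ∫⁻ x in {0}ᶜ, F x ∂μ := by rw [restrict_compl_singleton]
    _ = ∫⁻ θ, ∫⁻ s, F ((s : ℝ) • (θ : V))
          ∂Measure.volumeIoiPow (Module.finrank ℝ V - 1) ∂μ.toSphere := by
      rw [← lintegral_subtype_comap (measurableSet_singleton _).compl, hpolar,
        lintegral_prod _ (by fun_prop)]
    _ = _ := ?_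
  refine lintegral_congr fun θ ↦ ?_
  rw [Measure.volumeIoiPow, lintegral_withDensity_eq_lintegral_mul _ (by fun_prop) (by fun_prop)]
  exact lintegral_subtype_comap measurableSet_Ioi
    fun s : ℝ ↦ ENNReal.ofReal (s ^ (Module.finrank ℝ V - 1)) * F (s • (θ : V))

end Polar

section Isometry

variable {d : ℕ} {R r : ℝ} {g : E d → ℝ≥0∞} (ρ : E d ≃ₗᵢ[ℝ] E d)

lemma lintegral_comp_isometry (g : E d → ℝ≥0∞) : ∫⁻ x, g (ρ x) = ∫⁻ x, g x :=
  ρ.measurePreserving.lintegral_comp_emb ρ.toHomeomorph.measurableEmbedding g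

lemma simplexMoment_comp_isometry (hg : Measurable g) :
    simplexMoment (fun x ↦ g (ρ x)) = simplexMoment g := by
  have hdet : |LinearMap.det (ρ.toLinearEquiv : E d →ₗ[ℝ] E d)| = 1 := by
    rw [← LinearMap.normDet_eq_abs_det]
    exact ρ.toLinearIsometry.normDet_eq_one
  have hne := ρ.toLinearEquiv.isUnit_det'.ne_zero
  simpa [hdet] using simplexMoment_affine (ρ.toLinearEquiv : E d →ₗ[ℝ] E d) hne 0 hg

lemma IsAdmissible.comp_isometry (hg : IsAdmissible R r g) :
    IsAdmissible R r fun x ↦ g (ρ x) where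
  radius_pos := hg.radius_pos
  radius_le := hg.radius_le
  measurable := hg.measurable.comp ρ.continuous.measurable
  le_indicator x := by
    classical simpa [Set.indicator_apply] using hg.le_indicator (ρ x)
  lintegral_eq := by rw [lintegral_comp_isometry, hg.lintegral_eq]

lemma excess_comp_isometry (r : ℝ) (g : E d → ℝ≥0∞) (x : E d) :
    excess r (fun x ↦ g (ρ x)) x = excess r g (ρ x) := by
  classical simp [excess, Set.indicator_apply]

lemma deficit_comp_isometry (r : ℝ) (g : E d → ℝ≥0∞) (x : E d) :
    deficit r (fun x ↦ g (ρ x)) x = deficit r g (ρ x) := by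
  classical simp [deficit, Set.indicator_apply]

lemma excessMass_comp_isometry (r : ℝ) (g : E d → ℝ≥0∞) :
    excessMass r (fun x ↦ g (ρ x)) = excessMass r g := by
  simp only [excessMass, excess_comp_isometry, lintegral_comp_isometry]

lemma lineInteraction_comp_isometry (r : ℝ) (g : E d → ℝ≥0∞) (u : E d) :
    lineInteraction r (fun x ↦ g (ρ x)) u = lineInteraction r g (ρ u) := by
  simp only [lineInteraction, excess_comp_isometry, deficit_comp_isometry, map_add, map_smul]
  exact lintegral_comp_isometry ρ fun x ↦ excess r g x * ∫⁻ s : ℝ, deficit r g (x + s • ρ u)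

end Isometry

section Rounding

variable {k : ℕ} {R r : ℝ} {g : E (k + 1) → ℝ≥0∞}

lemma E.norm_cons_one_zero : ‖E.cons 1 (0 : E k)‖ = 1 := by
  rw [← sq_eq_sq₀ (norm_nonneg _) zero_le_one, E.norm_sq_cons]
  simp

lemma IsAdmissible.excessMass_ne_top (hg : IsAdmissible R r g) : excessMass r g ≠ ∞ :=
  ne_top_of_le_ne_top (hg.lintegral_eq ▸ measure_ball_lt_top.ne)
    (lintegral_mono fun _ ↦ Set.indicator_le_self _ _ _)

lemma IsAdmissible.exists_excessMass_add_lineInteraction_le (hg : IsAdmissible R r g)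
    {u : E (k + 1)} (hu : ‖u‖ = 1) :
    ∃ g' : E (k + 1) → ℝ≥0∞, (IsAdmissible R r g' ∧ simplexMoment g' ≤ simplexMoment g) ∧
      ENNReal.ofReal (2 * R) * excessMass r g' + lineInteraction r g u ≤
        ENNReal.ofReal (2 * R) * excessMass r g := by
  set e : E (k + 1) := E.cons 1 0
  set ρ : E (k + 1) ≃ₗᵢ[ℝ] E (k + 1) := (Submodule.span ℝ {e - u})ᗮ.reflection
  have hρ : ρ e = u := Submodule.reflection_sub (E.norm_cons_one_zero.trans hu.symm)
  have hgρ := hg.comp_isometry ρ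
  refine ⟨steinerBathtub fun x ↦ g (ρ x), ⟨hgρ.steinerBathtub, ?_⟩, ?_⟩
  · rw [← simplexMoment_comp_isometry ρ hg.measurable]
    exact simplexMoment_steinerBathtub_le hgρ.measurable hgρ.le_indicator
  · have hle := hgρ.excessMass_steinerBathtub_add_le
    rwa [excessMass_comp_isometry, lineInteraction_comp_isometry, hρ] at hle

lemma excessMass_le_lintegral_lines (hg : IsAdmissible R r g) {x : E (k + 1)} (hx : ‖x‖ ≤ R) :
    excessMass r g ≤ ENNReal.ofReal ((2 * R) ^ k) *
      ∫⁻ u, (∫⁻ s : ℝ, deficit r g (x + s • (u : E (k + 1))))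
        ∂(volume : Measure (E (k + 1))).toSphere := by
  have hm := hg.measurable
  rw [← hg.lintegral_deficit, ← lintegral_add_left_eq_self _ x,
    lintegral_eq_lintegral_toSphere _ (by fun_prop), finrank_euclideanSpace_fin,
    add_tsub_cancel_right, ← lintegral_const_mul' _ _ ENNReal.ofReal_ne_top]
  refine lintegral_mono fun u ↦ ?_
  rw [← lintegral_const_mul' _ _ ENNReal.ofReal_ne_top]
  refine le_trans (setLIntegral_mono' measurableSet_Ioi fun s (hs : 0 < s) ↦ ?_)
    (setLIntegral_le_lintegral (Set.Ioi 0) _)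
  rcases le_or_gt s (2 * R) with hsR | hsR
  · gcongr
  · have hnorm : ‖s • (u : E (k + 1))‖ = s := by
      rw [norm_smul, Real.norm_of_nonneg hs.le, norm_eq_of_mem_sphere, mul_one]
    have htri := norm_sub_le (x + s • (u : E (k + 1))) x
    rw [add_sub_cancel_left, hnorm] at htri
    have hout : x + s • (u : E (k + 1)) ∉ ball 0 r := by
      rw [mem_ball_zero_iff, not_lt]
      linarith [hg.radius_le]
    simp [deficit, hout]

lemma IsAdmissible.excessMass_sq_le (hg : IsAdmissible R r g) :
    excessMass r g ^ 2 ≤ ENNReal.ofReal ((2 * R) ^ k) *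
      ∫⁻ u, lineInteraction r g (u : E (k + 1)) ∂(volume : Measure (E (k + 1))).toSphere := by
  have hp := measurable_excess r hg.measurable
  have hq := measurable_deficit r hg.measurable
  have hline : Measurable fun p : E (k + 1) × sphere (0 : E (k + 1)) 1 ↦
      ∫⁻ s : ℝ, deficit r g (p.1 + s • (p.2 : E (k + 1))) :=
    Measurable.lintegral_prod_right'
      (f := fun q : (E (k + 1) × sphere (0 : E (k + 1)) 1) × ℝ ↦
        deficit r g (q.1.1 + q.2 • (q.1.2 : E (k + 1)))) (by fun_prop)
  have hsq : excessMass r g ^ 2 = ∫⁻ x, excess r g x * excessMass r g := by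
    rw [lintegral_mul_const _ hp, sq]
    rfl
  unfold lineInteraction
  rw [lintegral_lintegral_swap (by fun_prop), ← lintegral_const_mul' _ _ ENNReal.ofReal_ne_top, hsq]
  refine lintegral_mono fun x ↦ ?_
  rw [lintegral_const_mul _ (by fun_prop), mul_left_comm]
  by_cases hx : x ∈ ball (0 : E (k + 1)) R
  · exact mul_le_mul_right (excessMass_le_lintegral_lines hg (mem_ball_zero_iff.1 hx).le) _
  · have hgx : g x = 0 := by simpa [hx] using hg.le_indicator x
    have hexcess : excess r g x = 0 := by simp [excess, Set.indicator_apply_eq_zero, hgx]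
    simp [hexcess]

/-- The densities that replace `g` during symmetrization. -/
def roundings (R r : ℝ) (g : E (k + 1) → ℝ≥0∞) : Set (E (k + 1) → ℝ≥0∞) :=
  {g' | IsAdmissible R r g' ∧ simplexMoment g' ≤ simplexMoment g}

lemma iInf_excessMass_ne_top (hg : IsAdmissible R r g) :
    ⨅ g' ∈ roundings R r g, excessMass r g' ≠ ∞ :=
  ne_top_of_le_ne_top hg.excessMass_ne_top (iInf₂_le g ⟨hg, le_rfl⟩)

-- Averaging the gain of one symmetrization over all directions bounds it by the squared excess, so
-- the infimum cannot be positive.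
theorem iInf_excessMass_eq_zero (hg : IsAdmissible R r g) :
    ⨅ g' ∈ roundings R r g, excessMass r g' = 0 := by
  set m := ⨅ g' ∈ roundings R r g, excessMass r g'
  set σ := (volume : Measure (E (k + 1))).toSphere
  set c := ENNReal.ofReal ((2 * R) ^ k)
  set K := c * (ENNReal.ofReal (2 * R) * σ Set.univ)
  have hK : K ≠ ∞ := by finiteness
  have hstep (g') (hg' : g' ∈ roundings R r g) : K * m + m ^ 2 ≤ K * excessMass r g' := by
    have hdir (u : sphere (0 : E (k + 1)) 1) :
        ENNReal.ofReal (2 * R) * m + lineInteraction r g' u ≤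
          ENNReal.ofReal (2 * R) * excessMass r g' := by
      obtain ⟨g₂, ⟨hg₂, hle⟩, hgain⟩ :=
        hg'.1.exists_excessMass_add_lineInteraction_le (norm_eq_of_mem_sphere u)
      have hmem : g₂ ∈ roundings R r g := ⟨hg₂, hle.trans hg'.2⟩
      refine le_trans ?_ hgain
      gcongr
      exact iInf₂_le g₂ hmem
    have hint := lintegral_mono (μ := σ) hdir
    rw [lintegral_add_left measurable_const, lintegral_const, lintegral_const] at hint
    calc K * m + m ^ 2 ≤ K * m + excessMass r g' ^ 2 := by
          gcongr; exact iInf₂_le g' hg'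
      _ ≤ K * m + c * ∫⁻ u, lineInteraction r g' u ∂σ := by gcongr; exact hg'.1.excessMass_sq_le
      _ = c * (ENNReal.ofReal (2 * R) * m * σ Set.univ + ∫⁻ u, lineInteraction r g' u ∂σ) := by
          ring
      _ ≤ c * (ENNReal.ofReal (2 * R) * excessMass r g' * σ Set.univ) := by gcongr
      _ = K * excessMass r g' := by ring
  have hK0 : K ≠ 0 := by
    have hσ : σ Set.univ ≠ 0 := Measure.measure_univ_ne_zero.2 (Measure.toSphere_ne_zero _)
    have hR := hg.radius_pos.trans_le hg.radius_le
    have hc : c ≠ 0 := by simpa [c] using pow_pos (mul_pos two_pos hR) k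
    simp [K, hc, hσ, hR]
  have hle : (K * m + m ^ 2) / K ≤ m :=
    le_iInf₂ fun g' hg' ↦ ENNReal.div_le_of_le_mul' (hstep g' hg')
  rw [ENNReal.div_le_iff hK0 hK, mul_comm m] at hle
  have hm : K * m ≠ ∞ := ENNReal.mul_ne_top hK (iInf_excessMass_ne_top hg)
  simpa using (ENNReal.add_le_add_iff_left hm).1 (hle.trans_eq (add_zero _).symm)

end Rounding

section BallMinimality

variable {d k : ℕ} {R r : ℝ}

lemma measurable_indicator_ball (r : ℝ) :
    Measurable ((ball (0 : E d) r).indicator (1 : E d → ℝ≥0∞)) :=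
  measurable_one.indicator measurableSet_ball

lemma one_le_prod_add_sum_one_sub {ι : Type*} (s : Finset ι) {a : ι → ℝ≥0∞} (ha : ∀ i, a i ≤ 1) :
    1 ≤ ∏ i ∈ s, a i + ∑ i ∈ s, (1 - a i) := by
  classical
  induction s using Finset.induction with
  | empty => simp
  | insert j s hj ih =>
    rw [Finset.prod_insert hj, Finset.sum_insert hj]
    calc 1 = a j * 1 + (1 - a j) := by rw [mul_one, add_tsub_cancel_of_le (ha j)]
      _ ≤ a j * (∏ i ∈ s, a i + ∑ i ∈ s, (1 - a i)) + (1 - a j) := by gcongr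
      _ ≤ a j * ∏ i ∈ s, a i + 1 * ∑ i ∈ s, (1 - a i) + (1 - a j) := by
        rw [mul_add]
        gcongr
        exact ha j
      _ = _ := by ring

lemma exists_abs_det_simplexMatrix_le (d : ℕ) (r : ℝ) :
    ∃ M : ℝ, ∀ Y : Fin (d + 1) → E d, (∀ i, Y i ∈ ball 0 r) → |(simplexMatrix Y).det| ≤ M := by
  have hcpt : IsCompact (Set.univ.pi fun _ : Fin (d + 1) ↦ closedBall (0 : E d) r) :=
    isCompact_univ_pi fun _ ↦ isCompact_closedBall _ _
  obtain ⟨M, hM⟩ :=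
    (hcpt.image (continuous_det_simplexMatrix (d := d)).abs).isBounded.bddAbove
  exact ⟨M, fun Y hY ↦ hM ⟨Y, fun i _ ↦ ball_subset_closedBall (hY i), rfl⟩⟩

lemma exists_lintegral_prod_mul_det_le (d : ℕ) (r : ℝ) :
    ∃ M : ℝ, ∀ φ : Fin (d + 1) → E d → ℝ≥0∞, (∀ i, Measurable (φ i)) →
      (∀ i x, φ i x ≤ (ball 0 r).indicator 1 x) →
      ∫⁻ Y : Fin (d + 1) → E d, (∏ i, φ i (Y i)) * ENNReal.ofReal |(simplexMatrix Y).det| ≤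
        (∏ i, ∫⁻ x, φ i x) * ENNReal.ofReal M := by
  obtain ⟨M, hM⟩ := exists_abs_det_simplexMatrix_le d r
  refine ⟨M, fun φ hφ hφr ↦ ?_⟩
  rw [← lintegral_pi_prod hφ, ← lintegral_mul_const _ (by fun_prop)]
  refine lintegral_mono fun Y ↦ ?_
  by_cases hY : ∀ i, Y i ∈ ball 0 r
  · exact mul_le_mul_right (ENNReal.ofReal_le_ofReal (hM Y hY)) _
  · obtain ⟨i, hi⟩ := not_forall.1 hY
    have hzero : φ i (Y i) = 0 := by simpa [hi] using hφr i (Y i)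
    rw [Finset.prod_eq_zero (f := fun i ↦ φ i (Y i)) (Finset.mem_univ i) hzero, zero_mul, zero_mul]

/-- The factors of a product of indicators of the ball of radius `r`, with the one of index `i`
replaced by the deficit of `g`. -/
def deficitFactor (r : ℝ) (g : E d → ℝ≥0∞) (i : Fin (d + 1)) : Fin (d + 1) → E d → ℝ≥0∞ :=
  Function.update (fun _ ↦ (ball 0 r).indicator 1) i (deficit r g)

@[fun_prop] lemma measurable_deficitFactor (r : ℝ) {g : E d → ℝ≥0∞} (hg : Measurable g)
    (i j : Fin (d + 1)) : Measurable (deficitFactor r g i j) := by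
  rcases eq_or_ne j i with rfl | hj
  · simpa [deficitFactor] using measurable_deficit r hg
  · simpa [deficitFactor, hj] using measurable_indicator_ball r

lemma deficitFactor_le_indicator (r : ℝ) (g : E d → ℝ≥0∞) (i j : Fin (d + 1)) (x : E d) :
    deficitFactor r g i j x ≤ (ball 0 r).indicator 1 x := by
  rcases eq_or_ne j i with rfl | hj
  · simpa [deficitFactor] using deficit_le_indicator r g x
  · simp [deficitFactor, hj]

lemma prod_lintegral_deficitFactor (r : ℝ) (g : E d → ℝ≥0∞) (i : Fin (d + 1)) :
    ∏ j, ∫⁻ x, deficitFactor r g i j x =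
      (∫⁻ x, deficit r g x) * volume (ball (0 : E d) r) ^ d := by
  have hother (j : Fin (d + 1)) (hj : j ∈ ({i} : Finset _)ᶜ) :
      ∫⁻ x, deficitFactor r g i j x = volume (ball (0 : E d) r) := by
    rw [deficitFactor, Function.update_of_ne (by simpa using hj),
      lintegral_indicator_one measurableSet_ball]
  rw [Fintype.prod_eq_mul_prod_compl i, Finset.prod_congr rfl hother]
  simp [deficitFactor, Finset.card_compl]

lemma IsAdmissible.prod_indicator_ball_le {g : E d → ℝ≥0∞} (hg : IsAdmissible R r g)
    (Y : Fin (d + 1) → E d) :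
    ∏ i, (ball 0 r).indicator 1 (Y i) ≤
      ∏ i, g (Y i) + ∑ i, ∏ j, deficitFactor r g i j (Y j) := by
  by_cases hY : ∀ i, Y i ∈ ball 0 r
  · have hfactor (i : Fin (d + 1)) : ∏ j, deficitFactor r g i j (Y j) = 1 - g (Y i) := by
      rw [Finset.prod_eq_single i (fun j _ hj ↦ by simp [deficitFactor, hj, hY]) (by simp)]
      simp [deficitFactor, deficit, hY]
    simp only [hfactor, Set.indicator_of_mem (hY _), Pi.one_apply, Finset.prod_const_one]
    exact one_le_prod_add_sum_one_sub Finset.univ fun i ↦ hg.le_one (Y i)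
  · obtain ⟨i, hi⟩ := not_forall.1 hY
    rw [Finset.prod_eq_zero (Finset.mem_univ i) (Set.indicator_of_notMem hi _)]
    exact zero_le

lemma exists_simplexMoment_ball_le_add (d : ℕ) (r : ℝ) :
    ∃ C : ℝ≥0∞, C ≠ ∞ ∧ ∀ (R : ℝ) (g : E d → ℝ≥0∞), IsAdmissible R r g →
      simplexMoment ((ball (0 : E d) r).indicator 1) ≤ simplexMoment g + C * excessMass r g := by
  obtain ⟨M, hM⟩ := exists_lintegral_prod_mul_det_le d r
  set v := volume (ball (0 : E d) r)
  have hv : v ≠ ∞ := measure_ball_lt_top.ne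
  refine ⟨(d + 1 : ℕ) * (v ^ d * ENNReal.ofReal M), by finiteness, fun R g hg ↦ ?_⟩
  have hgm := hg.measurable
  calc simplexMoment ((ball (0 : E d) r).indicator 1)
      ≤ ∫⁻ Y : Fin (d + 1) → E d, (∏ i, g (Y i) + ∑ i, ∏ j, deficitFactor r g i j (Y j)) *
          ENNReal.ofReal |(simplexMatrix Y).det| :=
        lintegral_mono fun Y ↦ mul_le_mul_left (hg.prod_indicator_ball_le Y) _
    _ = simplexMoment g + ∑ i, ∫⁻ Y : Fin (d + 1) → E d,
          (∏ j, deficitFactor r g i j (Y j)) * ENNReal.ofReal |(simplexMatrix Y).det| := by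
      simp only [add_mul, Finset.sum_mul]
      rw [lintegral_add_left (by fun_prop), lintegral_finsetSum _ fun i _ ↦ by fun_prop]
      rfl
    _ ≤ simplexMoment g + ∑ _i : Fin (d + 1), excessMass r g * v ^ d * ENNReal.ofReal M := by
      gcongr with i
      rw [← hg.lintegral_deficit, ← prod_lintegral_deficitFactor r g i]
      exact hM _ (measurable_deficitFactor r hgm i) (deficitFactor_le_indicator r g i)
    _ = _ := by
      rw [Finset.sum_const, Finset.card_univ, Fintype.card_fin, nsmul_eq_mul]
      ring

theorem IsAdmissible.simplexMoment_ball_le {g : E (k + 1) → ℝ≥0∞} (hg : IsAdmissible R r g) :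
    simplexMoment ((ball (0 : E (k + 1)) r).indicator 1) ≤ simplexMoment g := by
  obtain ⟨C, hC, hle⟩ := exists_simplexMoment_ball_le_add (k + 1) r
  have hdiv : (simplexMoment ((ball (0 : E (k + 1)) r).indicator 1) - simplexMoment g) / C ≤
      ⨅ g' ∈ roundings R r g, excessMass r g' := by
    refine le_iInf₂ fun g' hg' ↦ ENNReal.div_le_of_le_mul' (tsub_le_iff_left.2 ?_)
    exact (hle R g' hg'.1).trans (add_le_add_left hg'.2 _)
  rw [iInf_excessMass_eq_zero hg, nonpos_iff_eq_zero, ENNReal.div_eq_zero_iff] at hdiv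
  exact tsub_eq_zero_iff_le.1 (hdiv.resolve_right hC)

/-- The volume of the unit ball of `E d`. -/
def unitBallVolume (d : ℕ) : ℝ≥0∞ := volume (ball (0 : E d) 1)

lemma unitBallVolume_ne_zero (d : ℕ) : unitBallVolume d ≠ 0 :=
  (measure_ball_pos volume (0 : E d) one_pos).ne'

lemma unitBallVolume_ne_top (d : ℕ) : unitBallVolume d ≠ ∞ := measure_ball_lt_top.ne

/-- The simplex moment of the unit ball of `E d`. -/
def ballSimplexMoment (d : ℕ) : ℝ≥0∞ := simplexMoment ((ball (0 : E d) 1).indicator 1)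

lemma ballSimplexMoment_ne_top (d : ℕ) : ballSimplexMoment d ≠ ∞ := by
  obtain ⟨M, hM⟩ := exists_lintegral_prod_mul_det_le d 1
  refine ne_top_of_le_ne_top ?_
    (hM (fun _ ↦ (ball 0 1).indicator 1) (fun _ ↦ measurable_indicator_ball 1) fun _ _ ↦ le_rfl)
  simp only [lintegral_indicator_one measurableSet_ball, Finset.prod_const]
  exact ENNReal.mul_ne_top (ENNReal.pow_ne_top measure_ball_lt_top.ne) ENNReal.ofReal_ne_top

lemma volume_ball_eq (hr : 0 ≤ r) :
    volume (ball (0 : E (k + 1)) r) = ENNReal.ofReal (r ^ (k + 1)) * unitBallVolume (k + 1) := by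
  rw [Measure.addHaar_ball _ _ hr, finrank_euclideanSpace_fin, unitBallVolume]

lemma simplexMoment_ball (hr : 0 ≤ r) :
    simplexMoment ((ball (0 : E (k + 1)) r).indicator 1) =
      ENNReal.ofReal (r ^ (k + 1)) ^ (k + 3) * ballSimplexMoment (k + 1) := by
  rcases hr.eq_or_lt with rfl | hr
  · simp [simplexMoment]
  have hdet : LinearMap.det (r • (LinearMap.id : E (k + 1) →ₗ[ℝ] E (k + 1))) = r ^ (k + 1) := by
    simp
  have hball : (fun x : E (k + 1) ↦ (ball (0 : E (k + 1)) r).indicator (1 : E (k + 1) → ℝ≥0∞)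
      (r • x)) = (ball 0 1).indicator 1 := by
    classical
    ext x
    simp only [Set.indicator_apply, mem_ball_zero_iff, norm_smul, Real.norm_of_nonneg hr.le,
      mul_lt_iff_lt_one_right hr, Pi.one_apply]
  rw [← simplexMoment_affine (r • (LinearMap.id : E (k + 1) →ₗ[ℝ] E (k + 1)))
    (by rw [hdet]; positivity) 0 (measurable_indicator_ball r), hdet, abs_of_pos (by positivity),
    ballSimplexMoment]
  simp only [LinearMap.smul_apply, LinearMap.id_apply, add_zero, hball]

lemma exists_volume_ball_eq {V : ℝ≥0∞} (hV0 : V ≠ 0) (hV : V ≠ ∞) :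
    ∃ r : ℝ, 0 < r ∧ volume (ball (0 : E (k + 1)) r) = V := by
  have hb0 := unitBallVolume_ne_zero (k + 1)
  have hb := unitBallVolume_ne_top (k + 1)
  have hq : V / unitBallVolume (k + 1) ≠ ∞ := ENNReal.div_ne_top hV hb0
  have hq0 : 0 < (V / unitBallVolume (k + 1)).toReal :=
    ENNReal.toReal_pos (ENNReal.div_ne_zero.2 ⟨hV0, hb⟩) hq
  have hr := Real.rpow_pos_of_pos hq0 ((k + 1 : ℕ) : ℝ)⁻¹
  refine ⟨_, hr, ?_⟩
  rw [volume_ball_eq hr.le, Real.rpow_inv_natCast_pow hq0.le k.succ_ne_zero,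
    ENNReal.ofReal_toReal hq, ENNReal.div_mul_cancel hb0 hb]

lemma le_simplexMoment_of_le_indicator {g : E (k + 1) → ℝ≥0∞} (hg : Measurable g)
    (hgR : ∀ x, g x ≤ (ball 0 R).indicator 1 x) :
    ballSimplexMoment (k + 1) * (∫⁻ x, g x) ^ (k + 3) ≤
      unitBallVolume (k + 1) ^ (k + 3) * simplexMoment g := by
  have hV : ∫⁻ x, g x ≠ ∞ := by
    refine ne_top_of_le_ne_top ?_ (lintegral_mono hgR)
    rw [lintegral_indicator_one measurableSet_ball]
    exact measure_ball_lt_top.ne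
  by_cases hV0 : ∫⁻ x, g x = 0
  · simp [hV0]
  obtain ⟨r, hr, hrV⟩ := exists_volume_ball_eq (k := k) hV0 hV
  have hadm : IsAdmissible (max R r) r g := by
    refine ⟨hr, le_max_right R r, hg, fun x ↦ (hgR x).trans ?_, hrV.symm⟩
    exact Set.indicator_le_indicator_of_subset (ball_subset_ball (le_max_left R r))
      (fun _ ↦ zero_le) x
  calc ballSimplexMoment (k + 1) * (∫⁻ x, g x) ^ (k + 3)
      = unitBallVolume (k + 1) ^ (k + 3) * simplexMoment ((ball 0 r).indicator 1) := by
        rw [← hrV, volume_ball_eq hr.le, simplexMoment_ball hr.le]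
        ring
    _ ≤ _ := mul_le_mul_right hadm.simplexMoment_ball_le _

lemma le_simplexMoment_of_le_one {g : E (k + 1) → ℝ≥0∞} (hg : Measurable g) (hg1 : ∀ x, g x ≤ 1) :
    ballSimplexMoment (k + 1) * (∫⁻ x, g x) ^ (k + 3) ≤
      unitBallVolume (k + 1) ^ (k + 3) * simplexMoment g := by
  have htrunc := (aecover_ball (μ := volume) (x := (0 : E (k + 1)))
    tendsto_natCast_atTop_atTop).lintegral_tendsto_of_countably_generated hg.aemeasurable
  refine le_of_tendsto' (ENNReal.Tendsto.const_mul
    (((ENNReal.continuous_pow (k + 3)).tendsto _).comp htrunc)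
    (Or.inr (ballSimplexMoment_ne_top _))) fun N ↦ ?_
  rw [Function.comp_apply, ← lintegral_indicator measurableSet_ball]
  refine (le_simplexMoment_of_le_indicator (R := N) (hg.indicator measurableSet_ball)
    fun x ↦ Set.indicator_le_indicator (hg1 x)).trans ?_
  exact mul_le_mul_right (simplexMoment_mono fun x ↦ Set.indicator_le_self _ _ _) _

theorem div_essSup_le_simplexMoment {g : E (k + 1) → ℝ≥0∞} (hg : Measurable g) :
    ballSimplexMoment (k + 1) * ((∫⁻ x, g x) ^ (k + 3) / essSup g volume) ≤
      unitBallVolume (k + 1) ^ (k + 3) * simplexMoment g := by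
  set M := essSup g volume
  have hae : ∀ᵐ x, g x ≤ M := ENNReal.ae_le_essSup g
  rcases eq_or_ne M 0 with hM0 | hM0
  · have hint : ∫⁻ x, g x = 0 := by
      rw [lintegral_eq_zero_iff hg]
      filter_upwards [hae] with x hx using le_antisymm (hx.trans_eq hM0) zero_le
    simp [hint]
  rcases eq_or_ne M ∞ with hMt | hMt
  · simp [hMt]
  have hpow0 : M⁻¹ ^ (k + 2) ≠ 0 := pow_ne_zero _ (ENNReal.inv_ne_zero.2 hMt)
  have hpow : M⁻¹ ^ (k + 2) ≠ ∞ := ENNReal.pow_ne_top (ENNReal.inv_ne_top.2 hM0)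
  have hint : ∫⁻ x, min (M⁻¹ * g x) 1 = M⁻¹ * ∫⁻ x, g x := by
    rw [← lintegral_const_mul _ hg]
    refine lintegral_congr_ae ?_
    filter_upwards [hae] with x hx
    exact min_eq_left (by rwa [ENNReal.inv_mul_le_iff hM0 hMt, mul_one])
  have hle := le_simplexMoment_of_le_one (g := fun x ↦ min (M⁻¹ * g x) 1) (by fun_prop)
    fun x ↦ min_le_right _ _
  rw [hint] at hle
  rw [← ENNReal.mul_le_mul_iff_right hpow0 hpow]
  calc M⁻¹ ^ (k + 2) * (ballSimplexMoment (k + 1) * ((∫⁻ x, g x) ^ (k + 3) / M))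
      = ballSimplexMoment (k + 1) * (M⁻¹ * ∫⁻ x, g x) ^ (k + 3) := by
        rw [div_eq_mul_inv]
        ring
    _ ≤ unitBallVolume (k + 1) ^ (k + 3) * simplexMoment fun x ↦ min (M⁻¹ * g x) 1 := hle
    _ ≤ unitBallVolume (k + 1) ^ (k + 3) * simplexMoment fun x ↦ M⁻¹ * g x := by
        gcongr
        exact simplexMoment_mono fun x ↦ min_le_left _ _
    _ = M⁻¹ ^ (k + 2) * (unitBallVolume (k + 1) ^ (k + 3) * simplexMoment g) := by
        rw [simplexMoment_const_mul hg]
        ring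

end BallMinimality

section Blaschke

lemma measure_eq_zero_of_forall_line {V : Type*} [NormedAddCommGroup V] [NormedSpace ℝ V]
    [FiniteDimensional ℝ V] [MeasurableSpace V] [BorelSpace V] (μ : Measure V)
    [μ.IsAddHaarMeasure] {S : Set V} (hS : MeasurableSet S) {z : V}
    (hline : ∀ u, volume {s : ℝ | z + s • u ∈ S} = 0) : μ S = 0 := by
  rcases subsingleton_or_nontrivial V with hV | hV
  · have hempty : S = ∅ := by
      refine Set.eq_empty_of_forall_notMem fun x hx ↦ ?_
      simpa [Subsingleton.elim (z + _) x, hx] using hline 0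
    simp [hempty]
  have hχ : Measurable (S.indicator (1 : V → ℝ≥0∞)) := measurable_one.indicator hS
  rw [← lintegral_indicator_one hS, ← lintegral_add_left_eq_self _ z,
    lintegral_eq_lintegral_toSphere _ (by fun_prop)]
  refine (lintegral_congr fun θ ↦ ?_).trans lintegral_zero
  refine (lintegral_congr_ae (ae_restrict_of_ae ?_)).trans lintegral_zero
  have hae : ∀ᵐ s : ℝ, z + s • (θ : V) ∉ S := measure_eq_zero_iff_ae_notMem.1 (hline θ)
  filter_upwards [hae] with s hs
  simp [hs]

lemma finite_setOf_det_add_smul_eq_zero {K m : Type*} [Field K] [Fintype m] [DecidableEq m]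
    {A : Matrix m m K} (hA : A.det ≠ 0) (N : Matrix m m K) :
    {s : K | (A + s • N).det = 0}.Finite := by
  set p : Polynomial K :=
    ((Polynomial.X : Polynomial K) • N.map Polynomial.C + A.map Polynomial.C).det with hp
  have heval (s : K) : p.eval s = (A + s • N).det := by
    rw [hp, ← Polynomial.coe_evalRingHom, RingHom.map_det]
    congr 1
    ext i j
    simp only [RingHom.mapMatrix_apply, Matrix.map_apply, Matrix.add_apply, Matrix.smul_apply,
      smul_eq_mul, Polynomial.coe_evalRingHom, Polynomial.eval_add, Polynomial.eval_mul,
      Polynomial.eval_X, Polynomial.eval_C, add_comm]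
  have hp0 : p ≠ 0 := fun h ↦ hA <| by
    rw [← Polynomial.coeff_det_X_add_C_zero N A, ← hp, h, Polynomial.coeff_zero]
  simpa only [Polynomial.IsRoot, heval] using Polynomial.finite_setOfPred_isRoot hp0

variable {d : ℕ}

lemma exists_det_simplexMatrix_ne_zero (d : ℕ) :
    ∃ Z : Fin (d + 1) → E d, (simplexMatrix Z).det ≠ 0 := by
  refine ⟨Fin.cons 0 fun i ↦ EuclideanSpace.single i 1, ?_⟩
  have hrow (z : Fin d → E d) (j : Fin d) :
      simplexMatrix (Fin.cons 0 z : Fin (d + 1) → E d) 0 j.succ = 0 := by simp [simplexMatrix]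
  have hcorner (z : Fin d → E d) :
      simplexMatrix (Fin.cons 0 z : Fin (d + 1) → E d) 0 0 = 1 := by simp [simplexMatrix]
  have hone : (simplexMatrix (Fin.cons 0 fun i : Fin d ↦ EuclideanSpace.single i 1)).submatrix
      Fin.succ Fin.succ = 1 := by
    ext i j
    simp [simplexMatrix, Matrix.one_apply, eq_comm]
  rw [Matrix.det_succ_row_zero, Fin.sum_univ_succ]
  simp [hone, hrow, hcorner]

lemma ae_det_simplexMatrix_ne_zero (d : ℕ) :
    ∀ᵐ Y : Fin (d + 1) → E d, (simplexMatrix Y).det ≠ 0 := by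
  obtain ⟨Z, hZ⟩ := exists_det_simplexMatrix_ne_zero d
  refine measure_eq_zero_iff_ae_notMem.1 (measure_eq_zero_of_forall_line volume (z := Z)
    (measurable_det_simplexMatrix (measurableSet_singleton 0)) fun U ↦ ?_)
  have hmatrix (s : ℝ) : simplexMatrix (Z + s • U) =
      simplexMatrix Z + s • Matrix.of fun i j ↦ E.cons 0 (U i) j := by
    ext i j
    refine Fin.cases ?_ (fun j ↦ ?_) j <;> simp [simplexMatrix]
  change volume {s : ℝ | (simplexMatrix (Z + s • U)).det = 0} = 0
  simpa only [hmatrix] using (finite_setOf_det_add_smul_eq_zero hZ _).measure_zero volume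

lemma lintegral_eq_det_mul_lintegral_inner {Y : Fin (d + 1) → E d}
    (hY : (simplexMatrix Y).det ≠ 0) {G : (Fin (d + 1) → ℝ) → ℝ≥0∞} (hG : Measurable G) :
    ∫⁻ h, G h = ENNReal.ofReal |(simplexMatrix Y).det| *
      ∫⁻ v : E (d + 1), G fun i ↦ inner ℝ (E.cons 1 (Y i)) v := by
  set A := Matrix.toLin' (simplexMatrix Y)
  have hdet : LinearMap.det A = (simplexMatrix Y).det := LinearMap.det_toLin' _
  have hA (v : E (d + 1)) : A (WithLp.ofLp v) = fun i ↦ inner ℝ (E.cons 1 (Y i)) v := by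
    ext i
    simp [A, simplexMatrix, Matrix.mulVec, dotProduct, PiLp.inner_apply, mul_comm]
  rw [← lintegral_affine volume A (by rwa [hdet]) 0 hG, hdet,
    ← (PiLp.volume_preserving_ofLp (Fin (d + 1))).lintegral_comp_emb
      (MeasurableEquiv.toLp 2 (Fin (d + 1) → ℝ)).symm.measurableEmbedding]
  simp only [add_zero, hA]

/-- The restriction of `F` to the hyperplane that is the graph of `y ↦ ⟪(1, y), v⟫`. -/
def graphRestrict (F : E (d + 1) → ℝ≥0∞) (v : E (d + 1)) : E d → ℝ≥0∞ :=
  fun y ↦ F (E.cons (inner ℝ (E.cons 1 y) v) y)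

@[fun_prop] lemma measurable_graphRestrict {F : E (d + 1) → ℝ≥0∞} (hF : Measurable F)
    {α : Type*} [MeasurableSpace α] {v : α → E (d + 1)} {y : α → E d} (hv : Measurable v)
    (hy : Measurable y) : Measurable fun a ↦ graphRestrict F (v a) (y a) := by
  unfold graphRestrict
  fun_prop

lemma measurable_prod_graphRestrict_mul_det {F : E (d + 1) → ℝ≥0∞} (hF : Measurable F) :
    Measurable fun q : E (d + 1) × (Fin (d + 1) → E d) ↦
      (∏ i, graphRestrict F q.1 (q.2 i)) * ENNReal.ofReal |(simplexMatrix q.2).det| :=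
  Measurable.mul (f := fun q : E (d + 1) × (Fin (d + 1) → E d) ↦ ∏ i, graphRestrict F q.1 (q.2 i))
    (by fun_prop) (measurable_det_simplexMatrix.comp measurable_snd).abs.ennreal_ofReal

lemma measurable_simplexMoment_graphRestrict {F : E (d + 1) → ℝ≥0∞} (hF : Measurable F) :
    Measurable fun v ↦ simplexMoment (graphRestrict F v) :=
  (measurable_prod_graphRestrict_mul_det hF).lintegral_prod_right'

-- Each choice of base points `Y` in general position identifies the heights of `d + 1` points above
-- them with the hyperplane through these points, with Jacobian `|det (simplexMatrix Y)|`.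
theorem lintegral_pow_eq_lintegral_simplexMoment {F : E (d + 1) → ℝ≥0∞} (hF : Measurable F) :
    (∫⁻ x, F x) ^ (d + 1) = ∫⁻ v : E (d + 1), simplexMoment (graphRestrict F v) := by
  have hprod : (∫⁻ x, F x) ^ (d + 1) = ∫⁻ X : Fin (d + 1) → E (d + 1), ∏ i, F (X i) := by
    rw [lintegral_pi_prod fun _ ↦ hF, Fin.prod_const]
  have hswap : ∫⁻ v : E (d + 1), simplexMoment (graphRestrict F v) = ∫⁻ Y : Fin (d + 1) → E d,
      ∫⁻ v, (∏ i, graphRestrict F v (Y i)) * ENNReal.ofReal |(simplexMatrix Y).det| := by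
    exact lintegral_lintegral_swap (measurable_prod_graphRestrict_mul_det hF).aemeasurable
  rw [hprod, hswap, E.lintegral_pi_cons (by fun_prop)]
  refine lintegral_congr_ae ?_
  filter_upwards [ae_det_simplexMatrix_ne_zero d] with Y hY
  rw [lintegral_eq_det_mul_lintegral_inner hY (by fun_prop),
    lintegral_mul_const' _ _ ENNReal.ofReal_ne_top, mul_comm]
  rfl

end Blaschke

section EssSup

variable {X Y : Type*} [MeasurableSpace X] [MeasurableSpace Y]

lemma lt_essSup_iff {μ : Measure X} {f : X → ℝ≥0∞} {a : ℝ≥0∞} :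
    a < essSup f μ ↔ μ {x | a < f x} ≠ 0 := by
  rw [← not_le, not_iff_not]
  refine ⟨fun h ↦ measure_mono_null (fun _ hx ↦ h.trans_lt hx)
    (meas_essSup_lt (f := f)), fun h ↦ ?_⟩
  exact essSup_le_of_ae_le a (by simpa [Filter.EventuallyLE, ae_iff] using h)

lemma measurable_essSup_prodMk (ν : Measure Y) [SFinite ν] {G : X × Y → ℝ≥0∞}
    (hG : Measurable G) : Measurable fun x ↦ essSup (fun y ↦ G (x, y)) ν := by
  refine measurable_of_Ioi fun a ↦ ?_
  have hpre : (fun x ↦ essSup (fun y ↦ G (x, y)) ν) ⁻¹' Set.Ioi a =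
      (fun x ↦ ν (Prod.mk x ⁻¹' (G ⁻¹' Set.Ioi a))) ⁻¹' {0}ᶜ :=
    Set.ext fun x ↦ lt_essSup_iff
  rw [hpre]
  exact measurable_measure_prodMk_left (hG measurableSet_Ioi) (measurableSet_singleton 0).compl

end EssSup

section OrthogonalSlices

variable {V : Type*} [NormedAddCommGroup V] [InnerProductSpace ℝ V]

lemma norm_sq_smul_add_orthogonal {θ : V} (hθ : ‖θ‖ = 1) (t : ℝ) (y : (ℝ ∙ θ)ᗮ) :
    ‖t • θ + (y : V)‖ ^ 2 = t ^ 2 + ‖y‖ ^ 2 := by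
  have horth : inner ℝ (t • θ) (y : V) = 0 := by
    rw [inner_smul_left, Submodule.mem_orthogonal_singleton_iff_inner_right.1 y.2, mul_zero]
  rw [norm_add_sq_real, horth, norm_smul, hθ]
  simp

variable [FiniteDimensional ℝ V] [MeasurableSpace V] [BorelSpace V]

lemma lintegral_eq_lintegral_orthogonal {θ : V} (hθ : ‖θ‖ = 1) {F : V → ℝ≥0∞}
    (hF : Measurable F) :
    ∫⁻ x, F x = ∫⁻ t : ℝ, ∫⁻ y : (ℝ ∙ θ)ᗮ, F (t • θ + (y : V)) := by
  set e := LinearIsometryEquiv.toSpanUnitSingleton (𝕜 := ℝ) θ hθ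
  have hsum : MeasurePreserving fun p : (ℝ ∙ θ) × (ℝ ∙ θ)ᗮ ↦ (p.1 : V) + p.2 := by
    convert! (ℝ ∙ θ).orthogonalDecomposition.symm.measurePreserving.comp
      (WithLp.volume_preserving_toLp _ _) using 1
  rw [← hsum.lintegral_comp hF, Measure.volume_eq_prod, lintegral_prod _ (by fun_prop)]
  exact (e.measurePreserving.lintegral_comp (f := fun x ↦ ∫⁻ y : (ℝ ∙ θ)ᗮ, F ((x : V) + y))
    (Measurable.lintegral_prod_right' (f := fun p : (ℝ ∙ θ) × (ℝ ∙ θ)ᗮ ↦ F ((p.1 : V) + p.2))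
      (by fun_prop))).symm

end OrthogonalSlices

section GraphSlices

variable {d : ℕ}

/-- The slope of the hyperplane `θᗮ`, viewed as a graph over the last `d` coordinates. -/
def gnomonic (θ : E (d + 1)) : E d := -(θ 0)⁻¹ • E.tail θ

@[fun_prop] lemma measurable_gnomonic : Measurable (gnomonic (d := d)) := by
  unfold gnomonic
  fun_prop

lemma inner_eq_mul_sub_inner_gnomonic {θ : E (d + 1)} (h0 : θ 0 ≠ 0) (x : E (d + 1)) :
    inner ℝ θ x = θ 0 * (x 0 - inner ℝ (E.tail x) (gnomonic θ)) := by
  conv_lhs => rw [← E.cons_tail θ, ← E.cons_tail x, E.inner_cons]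
  rw [gnomonic, inner_smul_right, real_inner_comm (E.tail θ)]
  field_simp
  ring

/-- The parametrization of the hyperplane `θᗮ` as a graph over the last `d` coordinates. -/
def orthogonalGraph (θ : E (d + 1)) (h0 : θ 0 ≠ 0) : E d ≃ₗ[ℝ] (ℝ ∙ θ)ᗮ where
  toFun y := ⟨E.cons (inner ℝ y (gnomonic θ)) y, by
    simp [Submodule.mem_orthogonal_singleton_iff_inner_right, inner_eq_mul_sub_inner_gnomonic h0]⟩
  invFun p := E.tail (p : E (d + 1))
  map_add' x y := Subtype.ext <| by simp [inner_add_left, E.cons_add]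
  map_smul' c x := Subtype.ext <| by simp [real_inner_smul_left, E.cons_smul]
  left_inv y := E.tail_cons _ y
  right_inv p := Subtype.ext <| by
    have hp := Submodule.mem_orthogonal_singleton_iff_inner_right.1 p.2
    rw [inner_eq_mul_sub_inner_gnomonic h0, mul_eq_zero, or_iff_right h0, sub_eq_zero] at hp
    simp only [← hp, E.cons_tail]

lemma exists_graphRestrict_cons_gnomonic {θ : E (d + 1)} (hθ : ‖θ‖ = 1) (h0 : θ 0 ≠ 0) (b : ℝ) :
    ∃ p : (ℝ ∙ θ)ᗮ, ∀ (F : E (d + 1) → ℝ≥0∞) (y : E d), graphRestrict F (E.cons b (gnomonic θ)) y =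
      F ((θ 0 * b) • θ + (orthogonalGraph θ h0 y + p : (ℝ ∙ θ)ᗮ)) := by
  have hmem : E.cons b 0 - (θ 0 * b) • θ ∈ (ℝ ∙ θ)ᗮ := by
    rw [Submodule.mem_orthogonal_singleton_iff_inner_right, inner_sub_right, inner_smul_right,
      real_inner_self_eq_norm_sq, hθ, inner_eq_mul_sub_inner_gnomonic h0]
    simp
  refine ⟨⟨_, hmem⟩, fun F y ↦ congrArg F ?_⟩
  have hsplit : E.cons (inner ℝ (E.cons 1 y) (E.cons b (gnomonic θ))) y =
      E.cons (inner ℝ y (gnomonic θ)) y + E.cons b 0 := by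
    rw [E.inner_cons, one_mul, add_comm b, ← E.cons_add, add_zero]
  rw [hsplit]
  simp only [orthogonalGraph, LinearEquiv.coe_mk, LinearMap.coe_mk, AddHom.coe_mk,
    Submodule.coe_add]
  abel

lemma lintegral_lintegral_graphRestrict_cons {F : E (d + 1) → ℝ≥0∞} (hF : Measurable F)
    (m : E d) : ∫⁻ b, ∫⁻ y, graphRestrict F (E.cons b m) y = ∫⁻ x, F x := by
  rw [E.lintegral_cons_symm hF, lintegral_lintegral_swap (Measurable.aemeasurable (by fun_prop))]
  refine lintegral_congr fun y ↦ ?_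
  simp only [graphRestrict, E.inner_cons, one_mul]
  exact lintegral_add_right_eq_self (fun b ↦ F (E.cons b y)) _

lemma lintegral_comp_smul {V : Type*} [NormedAddCommGroup V] [NormedSpace ℝ V] [MeasurableSpace V]
    [BorelSpace V] [FiniteDimensional ℝ V] (μ : Measure V) [μ.IsAddHaarMeasure] {c : ℝ}
    (hc : c ≠ 0) (h : V → ℝ≥0∞) :
    ENNReal.ofReal (|c| ^ Module.finrank ℝ V) * ∫⁻ x, h (c • x) ∂μ = ∫⁻ x, h x ∂μ := by
  have hmap : ∫⁻ x, h x ∂(μ.map (c • ·)) = ∫⁻ x, h (c • x) ∂μ :=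
    (Homeomorph.smulOfNeZero c hc).measurableEmbedding.lintegral_map h
  rw [← hmap, Measure.map_addHaar_smul μ hc, lintegral_smul_measure, smul_eq_mul, ← mul_assoc,
    ← ENNReal.ofReal_mul (by positivity), abs_inv, abs_pow, mul_inv_cancel₀ (by positivity),
    ENNReal.ofReal_one, one_mul]

lemma measurable_orthogonalGraph {θ : E (d + 1)} (h0 : θ 0 ≠ 0) :
    Measurable (orthogonalGraph θ h0) :=
  (orthogonalGraph θ h0).toContinuousLinearEquiv.continuous.measurable

lemma lintegral_graphRestrict_of_map_eq_smul {θ : E (d + 1)} (hθ : ‖θ‖ = 1) (h0 : θ 0 ≠ 0)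
    {c : ℝ≥0∞} (hc : volume.map (orthogonalGraph θ h0) = c • volume) {F : E (d + 1) → ℝ≥0∞}
    (hF : Measurable F) (b : ℝ) : ∫⁻ y, graphRestrict F (E.cons b (gnomonic θ)) y =
      c * ∫⁻ y : (ℝ ∙ θ)ᗮ, F ((θ 0 * b) • θ + (y : E (d + 1))) := by
  obtain ⟨p, hp⟩ := exists_graphRestrict_cons_gnomonic hθ h0 b
  let G (q : (ℝ ∙ θ)ᗮ) : ℝ≥0∞ := F ((θ 0 * b) • θ + (q : E (d + 1)))
  have hG : Measurable G := by fun_prop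
  simp only [hp]
  rw [← lintegral_map (f := fun q ↦ G (q + p)) (by fun_prop) (measurable_orthogonalGraph h0), hc,
    lintegral_smul_measure, lintegral_add_right_eq_self G, smul_eq_mul]

-- The constant is found by slicing the unit ball both along the normal `θ` and vertically.
theorem map_orthogonalGraph_volume {θ : E (d + 1)} (hθ : ‖θ‖ = 1) (h0 : θ 0 ≠ 0) :
    volume.map (orthogonalGraph θ h0) = ENNReal.ofReal |θ 0| • volume := by
  obtain ⟨c, -, hc⟩ := (orthogonalGraph θ h0).toLinearMap.exists_map_addHaar_eq_smul_addHaar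
    volume volume (orthogonalGraph θ h0).surjective
  replace hc : volume.map (orthogonalGraph θ h0) = c • volume := hc
  set χ : E (d + 1) → ℝ≥0∞ := (ball 0 1).indicator 1
  have hχ : Measurable χ := measurable_indicator_ball 1
  have hball : ∫⁻ x, χ x = unitBallVolume (d + 1) := lintegral_indicator_one measurableSet_ball
  set J := ∫⁻ b : ℝ, ∫⁻ y : (ℝ ∙ θ)ᗮ, χ ((θ 0 * b) • θ + (y : E (d + 1)))
  have hnormal : ENNReal.ofReal |θ 0| * J = unitBallVolume (d + 1) := by
    have hscale := lintegral_comp_smul (volume : Measure ℝ) h0 fun t ↦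
      ∫⁻ y : (ℝ ∙ θ)ᗮ, χ (t • θ + (y : E (d + 1)))
    rwa [← lintegral_eq_lintegral_orthogonal hθ hχ, hball, Module.finrank_self, pow_one] at hscale
  have hinner : Measurable fun b ↦ ∫⁻ y : (ℝ ∙ θ)ᗮ, χ ((θ 0 * b) • θ + (y : E (d + 1))) :=
    Measurable.lintegral_prod_right' (f := fun p : ℝ × (ℝ ∙ θ)ᗮ ↦
      χ ((θ 0 * p.1) • θ + (p.2 : E (d + 1)))) (by fun_prop)
  have hvertical : c * J = unitBallVolume (d + 1) := by
    rw [← hball, ← lintegral_lintegral_graphRestrict_cons hχ (gnomonic θ),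
      lintegral_congr (lintegral_graphRestrict_of_map_eq_smul hθ h0 hc hχ),
      lintegral_const_mul _ hinner]
  have hJ0 : J ≠ 0 := fun h ↦ unitBallVolume_ne_zero (d + 1) (by rw [← hnormal, h, mul_zero])
  have hJtop : J ≠ ∞ := fun h ↦ unitBallVolume_ne_top (d + 1) <| by
    rw [← hnormal, h, ENNReal.mul_top (by simpa using h0)]
  rw [hc, (ENNReal.mul_left_inj hJ0 hJtop).1 (hvertical.trans hnormal.symm)]

lemma lintegral_graphRestrict_cons_gnomonic {θ : E (d + 1)} (hθ : ‖θ‖ = 1) (h0 : θ 0 ≠ 0)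
    {F : E (d + 1) → ℝ≥0∞} (hF : Measurable F) (b : ℝ) :
    ∫⁻ y, graphRestrict F (E.cons b (gnomonic θ)) y =
      ENNReal.ofReal |θ 0| * ∫⁻ y : (ℝ ∙ θ)ᗮ, F ((θ 0 * b) • θ + (y : E (d + 1))) :=
  lintegral_graphRestrict_of_map_eq_smul hθ h0 (map_orthogonalGraph_volume hθ h0) hF b

lemma essSup_graphRestrict_cons_gnomonic {θ : E (d + 1)} (hθ : ‖θ‖ = 1) (h0 : θ 0 ≠ 0)
    {F : E (d + 1) → ℝ≥0∞} (hF : Measurable F) (b : ℝ) :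
    essSup (graphRestrict F (E.cons b (gnomonic θ))) volume =
      essSup (fun y : (ℝ ∙ θ)ᗮ ↦ F ((θ 0 * b) • θ + (y : E (d + 1)))) volume := by
  obtain ⟨p, hp⟩ := exists_graphRestrict_cons_gnomonic hθ h0 b
  let G (q : (ℝ ∙ θ)ᗮ) : ℝ≥0∞ := F ((θ 0 * b) • θ + (q : E (d + 1)))
  have hG : Measurable G := by fun_prop
  have hshift : essSup (fun q ↦ G (q + p)) volume = essSup G volume := by
    rw [← Function.comp_def G, ← essSup_map_measure_of_measurable hG (by fun_prop),
      map_add_right_eq_self]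
  have hscale : essSup (fun q ↦ G (q + p)) (ENNReal.ofReal |θ 0| • volume) =
      essSup (fun q ↦ G (q + p)) volume :=
    essSup_smul_measure (c := Real.toNNReal |θ 0|) (by simpa using h0) _
  rw [← hshift, ← hscale, ← map_orthogonalGraph_volume hθ h0,
    essSup_map_measure_of_measurable (by fun_prop) (measurable_orthogonalGraph h0).aemeasurable]
  exact congrArg (essSup · volume) (funext (hp F))

/-- The integrand of the theorem, for the hyperplane that is the graph of `y ↦ ⟪(1, y), v⟫`. -/
def graphFunctional (F : E (d + 1) → ℝ≥0∞) (v : E (d + 1)) : ℝ≥0∞ :=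
  (∫⁻ y, graphRestrict F v y) ^ (d + 2) / essSup (graphRestrict F v) volume

lemma measurable_graphFunctional {F : E (d + 1) → ℝ≥0∞} (hF : Measurable F) :
    Measurable (graphFunctional F) := by
  unfold graphFunctional
  have hrestrict : Measurable fun q : E (d + 1) × E d ↦ graphRestrict F q.1 q.2 := by fun_prop
  have hint : Measurable fun v ↦ ∫⁻ y, graphRestrict F v y := hrestrict.lintegral_prod_right'
  have hsup : Measurable fun v ↦ essSup (graphRestrict F v) volume :=
    measurable_essSup_prodMk volume (G := fun q ↦ graphRestrict F q.1 q.2) hrestrict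
  exact (hint.pow_const _).div hsup

theorem lintegral_orthogonal_pow_div_essSup {θ : E (d + 1)} (hθ : ‖θ‖ = 1) (h0 : θ 0 ≠ 0)
    {F : E (d + 1) → ℝ≥0∞} (hF : Measurable F) :
    ∫⁻ t : ℝ, (∫⁻ y : (ℝ ∙ θ)ᗮ, F (t • θ + (y : E (d + 1)))) ^ (d + 2) /
        essSup (fun y : (ℝ ∙ θ)ᗮ ↦ F (t • θ + (y : E (d + 1)))) volume =
      ENNReal.ofReal |θ 0|⁻¹ ^ (d + 1) * ∫⁻ b, graphFunctional F (E.cons b (gnomonic θ)) := by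
  have ha0 : ENNReal.ofReal |θ 0| ≠ 0 := by simpa using h0
  have hinv : ENNReal.ofReal |θ 0|⁻¹ = (ENNReal.ofReal |θ 0|)⁻¹ :=
    ENNReal.ofReal_inv_of_pos (abs_pos.2 h0)
  have hpoint (b : ℝ) : (∫⁻ y : (ℝ ∙ θ)ᗮ, F ((θ 0 * b) • θ + (y : E (d + 1)))) ^ (d + 2) /
      essSup (fun y : (ℝ ∙ θ)ᗮ ↦ F ((θ 0 * b) • θ + (y : E (d + 1)))) volume =
      ENNReal.ofReal |θ 0|⁻¹ ^ (d + 2) * graphFunctional F (E.cons b (gnomonic θ)) := by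
    rw [graphFunctional, lintegral_graphRestrict_cons_gnomonic hθ h0 hF,
      essSup_graphRestrict_cons_gnomonic hθ h0 hF, mul_pow, ← mul_div_assoc, ← mul_assoc,
      ← mul_pow, hinv, ENNReal.inv_mul_cancel ha0 ENNReal.ofReal_ne_top, one_pow, one_mul]
  rw [← lintegral_comp_smul volume h0]
  simp only [smul_eq_mul, hpoint]
  rw [lintegral_const_mul' _ _ (by finiteness), ← mul_assoc, Module.finrank_self, pow_one,
    pow_succ', ← mul_assoc, hinv, ENNReal.mul_inv_cancel ha0 ENNReal.ofReal_ne_top, one_mul]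

end GraphSlices

section Gnomonic

variable {d : ℕ}

lemma ae_toSphere_notMem {V : Type*} [NormedAddCommGroup V] [NormedSpace ℝ V]
    [FiniteDimensional ℝ V] [MeasurableSpace V] [BorelSpace V] (μ : Measure V)
    [μ.IsAddHaarMeasure] {S : Submodule ℝ V} (hS : S ≠ ⊤) :
    ∀ᵐ θ : sphere (0 : V) 1 ∂μ.toSphere, (θ : V) ∉ S := by
  have hmeas : MeasurableSet {θ : sphere (0 : V) 1 | (θ : V) ∈ S} :=
    S.closed_of_finiteDimensional.measurableSet.preimage measurable_subtype_coe
  simp only [ae_iff, not_not]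
  rw [μ.toSphere_apply' hmeas, mul_eq_zero]
  refine Or.inr (measure_mono_null ?_ (μ.addHaar_submodule S hS))
  rintro _ ⟨s, -, _, ⟨θ, hθ, rfl⟩, rfl⟩
  exact S.smul_mem s hθ

lemma ae_toSphere_zero_ne (d : ℕ) :
    ∀ᵐ θ : sphere (0 : E (d + 1)) 1 ∂(volume : Measure (E (d + 1))).toSphere,
      (θ : E (d + 1)) 0 ≠ 0 := by
  let proj : E (d + 1) →ₗ[ℝ] ℝ := EuclideanSpace.projₗ 0
  have hproj : LinearMap.ker proj ≠ ⊤ := fun h ↦ by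
    simpa [proj] using (h ▸ Submodule.mem_top : E.cons 1 0 ∈ LinearMap.ker proj)
  exact ae_toSphere_notMem volume hproj

lemma gnomonic_smul {s : ℝ} (hs : s ≠ 0) (x : E (d + 1)) : gnomonic (s • x) = gnomonic x := by
  ext i
  simp only [gnomonic, PiLp.smul_apply, smul_eq_mul, E.tail_apply]
  field_simp

lemma gnomonic_cons (s : ℝ) (z : E d) : gnomonic (E.cons s z) = -s⁻¹ • z := by
  rw [gnomonic, E.cons_zero, E.tail_cons]

/-- The weight on the slab `|x 0| < 1` that makes the gnomonic change of variables have constant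
mass on every ray of the sphere and on every vertical slice. -/
def slabWeight (d : ℕ) : ℝ → ℝ≥0∞ :=
  (Set.Ioo (-1) 1 \ {0}).indicator fun s ↦ ENNReal.ofReal |s|⁻¹ ^ d

@[fun_prop] lemma measurable_slabWeight (d : ℕ) : Measurable (slabWeight d) :=
  Measurable.indicator (by fun_prop) (measurableSet_Ioo.diff (measurableSet_singleton 0))

lemma lintegral_slabWeight_mul_pow (d : ℕ) :
    ∫⁻ s, slabWeight d s * ENNReal.ofReal (|s| ^ d) = 2 := by
  have hmeas : MeasurableSet (Set.Ioo (-1 : ℝ) 1 \ {0}) :=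
    measurableSet_Ioo.diff (measurableSet_singleton 0)
  have hpoint (s : ℝ) : slabWeight d s * ENNReal.ofReal (|s| ^ d) =
      (Set.Ioo (-1 : ℝ) 1 \ {0}).indicator 1 s := by
    by_cases hs : s ∈ Set.Ioo (-1 : ℝ) 1 \ {0}
    · have hs0 : |s| ≠ 0 := abs_ne_zero.2 hs.2
      rw [slabWeight, Set.indicator_of_mem hs, Set.indicator_of_mem hs,
        ← ENNReal.ofReal_pow (by positivity), ← ENNReal.ofReal_mul (by positivity), ← mul_pow,
        inv_mul_cancel₀ hs0, one_pow, ENNReal.ofReal_one, Pi.one_apply]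
    · rw [slabWeight, Set.indicator_of_notMem hs, Set.indicator_of_notMem hs, zero_mul]
  simp only [hpoint]
  rw [lintegral_indicator_one hmeas, measure_sdiff_null (measure_singleton _), Real.volume_Ioo]
  norm_num

lemma lintegral_pow_mul_slabWeight (d : ℕ) {a : ℝ} (ha : a ≠ 0) :
    ∫⁻ s in Set.Ioi 0, ENNReal.ofReal (s ^ d) * slabWeight d (s * a) =
      ENNReal.ofReal |a|⁻¹ ^ (d + 1) := by
  have ha0 : 0 < |a| := abs_pos.2 ha
  have hpoint (s : ℝ) (hs : s ∈ Set.Ioi 0) : ENNReal.ofReal (s ^ d) * slabWeight d (s * a) =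
      (Set.Iio |a|⁻¹).indicator (fun _ ↦ ENNReal.ofReal |a|⁻¹ ^ d) s := by
    have hs0 : 0 < s := hs
    have hmem : s * a ∈ Set.Ioo (-1 : ℝ) 1 \ {0} ↔ s ∈ Set.Iio |a|⁻¹ := by
      rw [Set.mem_sdiff, Set.mem_Ioo, ← abs_lt, abs_mul, abs_of_pos hs0, ← lt_div_iff₀ ha0, one_div]
      exact and_iff_left (mul_ne_zero hs0.ne' ha)
    by_cases h : s ∈ Set.Iio |a|⁻¹
    · rw [slabWeight, Set.indicator_of_mem h, Set.indicator_of_mem (hmem.2 h), abs_mul,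
        abs_of_pos hs0, ← ENNReal.ofReal_pow (by positivity), ← ENNReal.ofReal_mul (by positivity),
        ← mul_pow, mul_inv, mul_inv_cancel_left₀ hs0.ne', ENNReal.ofReal_pow (by positivity)]
    · rw [slabWeight, Set.indicator_of_notMem h, Set.indicator_of_notMem (mt hmem.1 h), mul_zero]
  rw [setLIntegral_congr_fun measurableSet_Ioi hpoint, lintegral_indicator measurableSet_Iio,
    setLIntegral_const, Measure.restrict_apply measurableSet_Iio, Set.inter_comm,
    Set.Ioi_inter_Iio, Real.volume_Ioo, sub_zero, pow_succ]

-- Integrate `slabWeight d (x 0) * h (gnomonic x)` in polar coordinates and over vertical slices.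
theorem lintegral_toSphere_gnomonic {h : E d → ℝ≥0∞} (hh : Measurable h) :
    ∫⁻ θ, ENNReal.ofReal |(θ : E (d + 1)) 0|⁻¹ ^ (d + 1) * h (gnomonic (θ : E (d + 1)))
      ∂(volume : Measure (E (d + 1))).toSphere = 2 * ∫⁻ m, h m := by
  let G (x : E (d + 1)) : ℝ≥0∞ := slabWeight d (x 0) * h (gnomonic x)
  have hG : Measurable G := by fun_prop
  have hray {θ : E (d + 1)} (h0 : θ 0 ≠ 0) :
      ∫⁻ s in Set.Ioi (0 : ℝ), ENNReal.ofReal (s ^ d) * G (s • θ) =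
        ENNReal.ofReal |θ 0|⁻¹ ^ (d + 1) * h (gnomonic θ) := by
    rw [← lintegral_pow_mul_slabWeight d h0, ← lintegral_mul_const _ (by fun_prop)]
    refine setLIntegral_congr_fun measurableSet_Ioi fun s hs ↦ ?_
    simp only [G, gnomonic_smul (ne_of_gt hs), PiLp.smul_apply, smul_eq_mul, mul_assoc]
  have hslice (s : ℝ) : ∫⁻ z, G (E.cons s z) =
      slabWeight d s * ENNReal.ofReal (|s| ^ d) * ∫⁻ m, h m := by
    rcases eq_or_ne s 0 with rfl | hs
    · simp [G, slabWeight]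
    simp only [G, E.cons_zero, gnomonic_cons]
    rw [lintegral_const_mul _ (by fun_prop), mul_assoc,
      ← lintegral_comp_smul volume (neg_ne_zero.2 (inv_ne_zero hs)) h, finrank_euclideanSpace_fin,
      ← mul_assoc (ENNReal.ofReal _), ← ENNReal.ofReal_mul (by positivity), ← mul_pow, abs_neg,
      abs_inv, mul_inv_cancel₀ (abs_ne_zero.2 hs), one_pow, ENNReal.ofReal_one, one_mul]
  calc _ = ∫⁻ x, G x := by
        rw [lintegral_eq_lintegral_toSphere volume hG, finrank_euclideanSpace_fin,
          Nat.add_sub_cancel]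
        refine (lintegral_congr_ae ?_).symm
        filter_upwards [ae_toSphere_zero_ne d] with θ h0 using hray h0
    _ = 2 * ∫⁻ m, h m := by
        simp only [E.lintegral_cons hG, hslice]
        rw [lintegral_mul_const _ (by fun_prop), lintegral_slabWeight_mul_pow]

/-- The length of the normal `(1, -m)` of the graph of slope `m`. -/
def normalLength (m : E d) : ℝ := √(1 + ‖m‖ ^ 2)

lemma normalLength_pos (m : E d) : 0 < normalLength m := Real.sqrt_pos.2 (by positivity)

@[fun_prop] lemma measurable_normalLength : Measurable (normalLength (d := d)) := by
  unfold normalLength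
  fun_prop

/-- The unit normal of the graph of slope `m`. -/
def unitNormal (m : E d) : E (d + 1) := (normalLength m)⁻¹ • E.cons 1 (-m)

lemma norm_unitNormal (m : E d) : ‖unitNormal m‖ = 1 := by
  have hnorm : ‖E.cons 1 (-m)‖ = normalLength m := by
    rw [normalLength, ← Real.sqrt_sq (norm_nonneg _), E.norm_sq_cons, norm_neg, one_pow]
  have hpos := normalLength_pos m
  rw [unitNormal, norm_smul, hnorm, Real.norm_of_nonneg (by positivity), inv_mul_cancel₀ hpos.ne']

lemma unitNormal_zero (m : E d) : unitNormal m 0 = (normalLength m)⁻¹ := by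
  simp [unitNormal]

lemma gnomonic_unitNormal (m : E d) : gnomonic (unitNormal m) = m := by
  rw [unitNormal, gnomonic_smul (inv_ne_zero (normalLength_pos m).ne'), gnomonic_cons]
  simp

lemma normalLength_gnomonic {θ : E (d + 1)} (hθ : ‖θ‖ = 1) (h0 : θ 0 ≠ 0) :
    normalLength (gnomonic θ) = |θ 0|⁻¹ := by
  have hsplit : θ 0 ^ 2 + ‖E.tail θ‖ ^ 2 = 1 := by
    rw [← E.norm_sq_cons, E.cons_tail, hθ, one_pow]
  rw [normalLength, ← abs_inv, ← Real.sqrt_sq_eq_abs, gnomonic, norm_smul, norm_neg, norm_inv,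
    Real.norm_eq_abs, mul_pow, inv_pow, sq_abs]
  congr 1
  field_simp
  exact hsplit

end Gnomonic

section UnitBall

variable {d k : ℕ}

lemma abs_det_comp_orthogonalGraph {θ : E (d + 1)} (hθ : ‖θ‖ = 1) (h0 : θ 0 ≠ 0)
    (ι : (ℝ ∙ θ)ᗮ ≃ₗᵢ[ℝ] E d) :
    ENNReal.ofReal |θ 0| *
      ENNReal.ofReal |LinearMap.det ((orthogonalGraph θ h0).trans ι.toLinearEquiv).toLinearMap| =
        1 := by
  set A := ((orthogonalGraph θ h0).trans ι.toLinearEquiv).toLinearMap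
  have hχ := measurable_indicator_ball (d := d) 1
  have hA : LinearMap.det A ≠ 0 := (LinearEquiv.isUnit_det' _).ne_zero
  have hmap : ∫⁻ x, (ball (0 : E d) 1).indicator 1 (A x) =
      ENNReal.ofReal |θ 0| * unitBallVolume d := by
    change ∫⁻ x, (ball (0 : E d) 1).indicator 1 (ι (orthogonalGraph θ h0 x)) = _
    rw [← lintegral_map (f := fun q ↦ (ball (0 : E d) 1).indicator 1 (ι q))
      (hχ.comp ι.continuous.measurable) (measurable_orthogonalGraph h0),
      map_orthogonalGraph_volume hθ h0, lintegral_smul_measure, smul_eq_mul,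
      ι.measurePreserving.lintegral_comp hχ, lintegral_indicator_one measurableSet_ball,
      unitBallVolume]
  have haffine := lintegral_affine volume A hA 0 hχ
  simp only [add_zero] at haffine
  rw [hmap, lintegral_indicator_one measurableSet_ball, ← unitBallVolume, ← mul_assoc,
    mul_comm (ENNReal.ofReal _)] at haffine
  exact (ENNReal.mul_eq_right (unitBallVolume_ne_zero d) (unitBallVolume_ne_top d)).1 haffine

lemma simplexMoment_graphRestrict_cons_gnomonic {θ : E (d + 1)} (hθ : ‖θ‖ = 1) (h0 : θ 0 ≠ 0)
    (ι : (ℝ ∙ θ)ᗮ ≃ₗᵢ[ℝ] E d) {F : E (d + 1) → ℝ≥0∞} (hF : Measurable F) (b : ℝ) :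
    simplexMoment (graphRestrict F (E.cons b (gnomonic θ))) = ENNReal.ofReal |θ 0| ^ (d + 2) *
      simplexMoment fun w ↦ F ((θ 0 * b) • θ + (ι.symm w : E (d + 1))) := by
  obtain ⟨p, hp⟩ := exists_graphRestrict_cons_gnomonic hθ h0 b
  set A := ((orthogonalGraph θ h0).trans ι.toLinearEquiv).toLinearMap
  have hA : LinearMap.det A ≠ 0 := (LinearEquiv.isUnit_det' _).ne_zero
  have hgraph : graphRestrict F (E.cons b (gnomonic θ)) = fun y ↦
      F ((θ 0 * b) • θ + (ι.symm (A y + ι p) : E (d + 1))) := by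
    ext y
    rw [hp, map_add]
    simp [A]
  have hmeas : Measurable fun w ↦ F ((θ 0 * b) • θ + (ι.symm w : E (d + 1))) :=
    hF.comp (by fun_prop)
  rw [hgraph, ← simplexMoment_affine A hA (ι p) hmeas, ← mul_assoc, ← mul_pow,
    abs_det_comp_orthogonalGraph hθ h0 ι, one_pow, one_mul]

lemma smul_add_mem_ball_iff {θ : E (d + 1)} (hθ : ‖θ‖ = 1) (t : ℝ) (y : (ℝ ∙ θ)ᗮ) :
    t • θ + (y : E (d + 1)) ∈ ball (0 : E (d + 1)) 1 ↔ ‖y‖ < √(1 - t ^ 2) := by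
  rw [mem_ball_zero_iff, Real.lt_sqrt (norm_nonneg _), ← sq_lt_one_iff₀ (norm_nonneg _),
    norm_sq_smul_add_orthogonal hθ, lt_sub_iff_add_lt']

lemma simplexMoment_graphRestrict_ball (b : ℝ) (m : E (k + 1)) :
    simplexMoment (graphRestrict ((ball (0 : E (k + 2)) 1).indicator 1) (E.cons b m)) =
      ENNReal.ofReal (normalLength m)⁻¹ ^ (k + 3) *
        (ENNReal.ofReal (√(1 - ((normalLength m)⁻¹ * b) ^ 2) ^ ((k + 1) * (k + 3))) *
          ballSimplexMoment (k + 1)) := by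
  classical
  have hθ := norm_unitNormal m
  have hpos : 0 < (normalLength m)⁻¹ := inv_pos.2 (normalLength_pos m)
  have h0 : unitNormal m 0 ≠ 0 := by rw [unitNormal_zero]; exact hpos.ne'
  have hfin : Fact (Module.finrank ℝ (E (k + 2)) = k + 1 + 1) := ⟨finrank_euclideanSpace_fin⟩
  let ι := (OrthonormalBasis.fromOrthogonalSpanSingleton (𝕜 := ℝ) (k + 1)
    (norm_ne_zero_iff.1 (hθ.trans_ne one_ne_zero))).repr
  have hslice (t : ℝ) : (fun w ↦ (ball (0 : E (k + 2)) 1).indicator (1 : E (k + 2) → ℝ≥0∞)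
      (t • unitNormal m + (ι.symm w : E (k + 2)))) =
        (ball (0 : E (k + 1)) √(1 - t ^ 2)).indicator 1 := by
    ext w
    simp only [Set.indicator_apply, smul_add_mem_ball_iff hθ, ι.symm.norm_map, mem_ball_zero_iff,
      Pi.one_apply]
  have hmoment := simplexMoment_graphRestrict_cons_gnomonic hθ h0 ι (measurable_indicator_ball 1) b
  rwa [gnomonic_unitNormal, unitNormal_zero, abs_of_pos hpos, hslice,
    simplexMoment_ball (Real.sqrt_nonneg _), ← ENNReal.ofReal_pow (by positivity),
    ← ENNReal.ofReal_pow (by positivity), ← pow_mul, ENNReal.ofReal_pow hpos.le] at hmoment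

/-- The total mass of the density, up to a factor `2`, of the surface measure of the sphere in the
gnomonic chart. -/
def gnomonicMass (d : ℕ) : ℝ≥0∞ := ∫⁻ m : E d, ENNReal.ofReal (normalLength m)⁻¹ ^ (d + 1)

/-- The ratio of the volumes of the unit balls of dimensions `N + 1` and `N`, as an integral over
parallel slices. -/
def sliceIntegral (N : ℕ) : ℝ≥0∞ := ∫⁻ t : ℝ, ENNReal.ofReal (√(1 - t ^ 2) ^ N)

lemma unitBallVolume_succ (hd : d ≠ 0) :
    unitBallVolume (d + 1) = sliceIntegral d * unitBallVolume d := by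
  obtain ⟨k, rfl⟩ := Nat.exists_eq_succ_of_ne_zero hd
  have hslice (t : ℝ) : ∫⁻ z, (ball (0 : E (k + 2)) 1).indicator 1 (E.cons t z) =
      ENNReal.ofReal (√(1 - t ^ 2) ^ (k + 1)) * unitBallVolume (k + 1) := by
    classical
    rw [← volume_ball_eq (Real.sqrt_nonneg _), ← lintegral_indicator_one measurableSet_ball]
    refine lintegral_congr fun z ↦ ?_
    have hmem : E.cons t z ∈ ball (0 : E (k + 2)) 1 ↔ z ∈ ball (0 : E (k + 1)) √(1 - t ^ 2) := by
      rw [mem_ball_zero_iff, mem_ball_zero_iff, Real.lt_sqrt (norm_nonneg _),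
        ← sq_lt_one_iff₀ (norm_nonneg _), E.norm_sq_cons, lt_sub_iff_add_lt']
    simp only [Set.indicator_apply, hmem, Pi.one_apply]
  rw [unitBallVolume, ← lintegral_indicator_one measurableSet_ball,
    E.lintegral_cons (measurable_indicator_ball 1), lintegral_congr hslice,
    lintegral_mul_const _ (by fun_prop), sliceIntegral]

lemma unitBallVolume_pow (k : ℕ) :
    unitBallVolume (k + 2) ^ (k + 2) =
      gnomonicMass (k + 1) * (sliceIntegral ((k + 1) * (k + 3)) * ballSimplexMoment (k + 1)) := by
  have hχ := measurable_indicator_ball (d := k + 2) 1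
  rw [unitBallVolume, ← lintegral_indicator_one measurableSet_ball,
    lintegral_pow_eq_lintegral_simplexMoment hχ,
    E.lintegral_cons_symm (measurable_simplexMoment_graphRestrict hχ), gnomonicMass,
    ← lintegral_mul_const _ (by fun_prop)]
  refine lintegral_congr fun m ↦ ?_
  have hpos : 0 < (normalLength m)⁻¹ := inv_pos.2 (normalLength_pos m)
  have hscale := lintegral_comp_smul volume hpos.ne' fun t : ℝ ↦
    ENNReal.ofReal (√(1 - t ^ 2) ^ ((k + 1) * (k + 3)))
  simp only [Module.finrank_self, pow_one, abs_of_pos hpos, smul_eq_mul] at hscale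
  simp only [simplexMoment_graphRestrict_ball]
  rw [lintegral_const_mul' _ _ (by finiteness), lintegral_mul_const _ (by fun_prop), sliceIntegral,
    ← hscale]
  ring

lemma unitBallVolume_pow_mul (k : ℕ) :
    unitBallVolume (k + 2) ^ (k + 2) * unitBallVolume ((k + 1) * (k + 3)) =
      gnomonicMass (k + 1) * ballSimplexMoment (k + 1) *
        unitBallVolume ((k + 1) * (k + 3) + 1) := by
  rw [unitBallVolume_pow, unitBallVolume_succ (by positivity)]
  ring

lemma ballSimplexMoment_ne_zero (k : ℕ) : ballSimplexMoment (k + 1) ≠ 0 := fun h ↦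
  pow_ne_zero (k + 2) (unitBallVolume_ne_zero (k + 2)) <| by
    rw [unitBallVolume_pow, h, mul_zero, mul_zero]

lemma toSphere_univ_eq_gnomonicMass (d : ℕ) :
    (volume : Measure (E (d + 1))).toSphere Set.univ = 2 * gnomonicMass d := by
  rw [gnomonicMass, ← lintegral_toSphere_gnomonic (by fun_prop), ← lintegral_one]
  refine lintegral_congr_ae ?_
  filter_upwards [ae_toSphere_zero_ne d] with θ h0
  rw [normalLength_gnomonic (norm_eq_of_mem_sphere θ) h0, inv_inv, ← mul_pow,
    ← ENNReal.ofReal_mul (by positivity), inv_mul_cancel₀ (abs_ne_zero.2 h0), ENNReal.ofReal_one,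
    one_pow]

lemma lintegral_sphMeasure_gnomonic {h : E d → ℝ≥0∞} (hh : Measurable h) :
    ∫⁻ θ, ENNReal.ofReal |(θ : E (d + 1)) 0|⁻¹ ^ (d + 1) * h (gnomonic (θ : E (d + 1)))
      ∂sphMeasure (d + 1) = (gnomonicMass d)⁻¹ * ∫⁻ m, h m := by
  rw [sphMeasure, lintegral_smul_measure, lintegral_toSphere_gnomonic hh,
    toSphere_univ_eq_gnomonicMass, smul_eq_mul,
    ENNReal.mul_inv (Or.inl two_ne_zero) (Or.inl ENNReal.ofNat_ne_top), mul_mul_mul_comm,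
    ENNReal.inv_mul_cancel two_ne_zero ENNReal.ofNat_ne_top, one_mul]

end UnitBall

section Constant

lemma unitBallVolume_eq_ofReal_ballVol {m : ℕ} (hm : m ≠ 0) :
    unitBallVolume m = ENNReal.ofReal (ballVol m) := by
  have : Nonempty (Fin m) := Fin.pos_iff_nonempty.1 (Nat.pos_of_ne_zero hm)
  rw [unitBallVolume, EuclideanSpace.volume_ball, Fintype.card_fin, ENNReal.ofReal_one, one_pow,
    one_mul, ballVol, Real.sqrt_eq_rpow, ← Real.rpow_natCast, ← Real.rpow_mul Real.pi_pos.le,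
    one_div_mul_eq_div]

lemma ballVol_pos (m : ℕ) : 0 < ballVol m :=
  div_pos (Real.rpow_pos_of_pos Real.pi_pos _) (Real.Gamma_pos_of_pos (by positivity))

lemma ofReal_ballVol_ratio (k : ℕ) :
    ENNReal.ofReal (ballVol (k + 1) ^ (k + 3) * ballVol ((k + 2) ^ 2) /
        (ballVol (k + 2) ^ (k + 2) * ballVol ((k + 2) ^ 2 - 1))) =
      unitBallVolume (k + 1) ^ (k + 3) / (gnomonicMass (k + 1) * ballSimplexMoment (k + 1)) := by
  have hsq : (k + 2) ^ 2 = (k + 1) * (k + 3) + 1 := by ring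
  have hpos := ballVol_pos
  rw [hsq, Nat.add_sub_cancel,
    ENNReal.ofReal_div_of_pos (mul_pos (pow_pos (hpos _) _) (hpos _)),
    ENNReal.ofReal_mul (pow_pos (hpos _) _).le, ENNReal.ofReal_mul (pow_pos (hpos _) _).le,
    ENNReal.ofReal_pow (hpos _).le, ENNReal.ofReal_pow (hpos _).le,
    ← unitBallVolume_eq_ofReal_ballVol (by positivity),
    ← unitBallVolume_eq_ofReal_ballVol (by positivity),
    ← unitBallVolume_eq_ofReal_ballVol (by positivity),
    ← unitBallVolume_eq_ofReal_ballVol (by positivity), unitBallVolume_pow_mul]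
  exact ENNReal.mul_div_mul_right _ _ (unitBallVolume_ne_zero _) (unitBallVolume_ne_top _)

end Constant

section RadonInequality

variable {d k : ℕ}

lemma lintegral_Radon_pow_div_essSup {F : E (d + 1) → ℝ≥0∞} (hF : Measurable F) :
    ∫⁻ θ, ∫⁻ t : ℝ, Radon (d + 1) F θ t ^ (d + 2) /
        essSup (fun y : (ℝ ∙ (θ : E (d + 1)))ᗮ ↦ F (t • (θ : E (d + 1)) + (y : E (d + 1)))) volume
      ∂volume ∂sphMeasure (d + 1) = (gnomonicMass d)⁻¹ * ∫⁻ v, graphFunctional F v := by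
  have hgraph := measurable_graphFunctional hF
  rw [E.lintegral_cons_symm hgraph, ← lintegral_sphMeasure_gnomonic <|
    Measurable.lintegral_prod_right' (f := fun p : E d × ℝ ↦ graphFunctional F (E.cons p.2 p.1))
      (by fun_prop)]
  refine lintegral_congr_ae (Measure.ae_smul_measure ?_ _)
  filter_upwards [ae_toSphere_zero_ne d] with θ h0
  exact lintegral_orthogonal_pow_div_essSup (norm_eq_of_mem_sphere θ) h0 hF

lemma lintegral_graphFunctional_le {F : E (k + 2) → ℝ≥0∞} (hF : Measurable F) :
    ballSimplexMoment (k + 1) * ∫⁻ v, graphFunctional F v ≤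
      unitBallVolume (k + 1) ^ (k + 3) * (∫⁻ x, F x) ^ (k + 2) := by
  rw [lintegral_pow_eq_lintegral_simplexMoment hF,
    ← lintegral_const_mul _ (measurable_graphFunctional hF),
    ← lintegral_const_mul _ (measurable_simplexMoment_graphRestrict hF)]
  exact lintegral_mono fun v ↦ div_essSup_le_simplexMoment (by fun_prop)

end RadonInequality

theorem stmt11_general (n : ℕ) (hn : 2 ≤ n) {F : EuclideanSpace ℝ (Fin n) → ℝ≥0∞}
    (hF : Measurable F) :
    ∫⁻ θ, ∫⁻ t : ℝ, Radon n F θ t ^ (n + 1) /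
        essSup (fun y : (ℝ ∙ (θ : EuclideanSpace ℝ (Fin n)))ᗮ ↦
          F (t • (θ : EuclideanSpace ℝ (Fin n)) + (y : EuclideanSpace ℝ (Fin n)))) volume
      ∂volume ∂sphMeasure n ≤
      ENNReal.ofReal (ballVol (n - 1) ^ (n + 1) * ballVol (n ^ 2) /
          (ballVol n ^ n * ballVol (n ^ 2 - 1))) * (∫⁻ x, F x) ^ n := by
  obtain ⟨k, rfl⟩ := Nat.exists_eq_add_of_le' hn
  have hK0 := ballSimplexMoment_ne_zero k
  have hK := ballSimplexMoment_ne_top (k + 1)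
  calc _ = (gnomonicMass (k + 1))⁻¹ * ∫⁻ v, graphFunctional F v :=
        lintegral_Radon_pow_div_essSup hF
    _ ≤ (gnomonicMass (k + 1))⁻¹ * ((ballSimplexMoment (k + 1))⁻¹ *
          (unitBallVolume (k + 1) ^ (k + 3) * (∫⁻ x, F x) ^ (k + 2))) := by
        gcongr
        exact (ENNReal.mul_le_iff_le_inv hK0 hK).1 (lintegral_graphFunctional_le hF)
    _ = _ := by
        rw [show k + 2 - 1 = k + 1 from rfl, ofReal_ballVol_ratio, div_eq_mul_inv,
          ENNReal.mul_inv (Or.inr hK) (Or.inr hK0)]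
        ring

/-- The Dann–Paouris–Pivovarov inequality for the hyperplane Radon transform
(case `k = n-1`): here `‖f‖_{θ,t}` is the essential supremum of `f` on the affine
hyperplane `θ^⊥ + tθ`, and in `ℝ≥0∞` one has `0/0 = 0`, which realizes the convention
that the integrand vanishes when `‖f‖_{θ,t} = 0`. -/
theorem stmt11 (n : ℕ) (hn : 2 ≤ n) (f : EuclideanSpace ℝ (Fin n) → ℝ)
    (hf : Measurable f) (hf0 : ∀ x, 0 ≤ f x) (hfb : ∃ C : ℝ, ∀ x, f x ≤ C)
    (hfi : Integrable f) :
    (∫⁻ θ, ∫⁻ t : ℝ,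
        Radon n (fun x => ENNReal.ofReal (f x)) θ t ^ (n + 1) /
          essSup (fun y : ((ℝ ∙ (θ : EuclideanSpace ℝ (Fin n)))ᗮ) =>
              ENNReal.ofReal (f (t • (θ : EuclideanSpace ℝ (Fin n)) +
                (y : EuclideanSpace ℝ (Fin n))))) volume
        ∂volume ∂(sphMeasure n)) ≤
      ENNReal.ofReal (ballVol (n - 1) ^ (n + 1) * ballVol (n ^ 2) /
          (ballVol n ^ n * ballVol (n ^ 2 - 1))) *
        (∫⁻ x, ENNReal.ofReal (f x)) ^ n := by
  exact stmt11_general n hn hf.ennreal_ofReal
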